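/- arXiv:1711.05222 — 5 statements merged into one kernel-verified Lean document; each statement's English description precedes it below -/
import Mathlib

section
/- Let X be a non-compact locally compact Hausdorff space, 𝔽 ∈ {ℝ, ℂ}, F ⊂ C(X,𝔽) a 2-independent linear subspace, and υ : X → 𝔽 ∖ {0} a continuous function. Let F' be the algebraic dual of F equipped with the topology of pointwise convergence, and define κ : X → F' by κ(x)(f) = υ(x)·f(x). Then the following are equivalent: (a) the extension of κ to the one-point compactification X̂ of X that sends the point at infinity to 0 ∈ F' is a topological embedding of X̂ into F' (so in particular κ is a topological embedding and κ(X) ∪ {0} is homeomorphic to X̂); (b) the function υ·f belongs to C₀(X,𝔽) for every f ∈ F. -/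
open Filter Topology

/-!
A map out of the compact space `OnePoint X` into a Hausdorff space is an embedding as soon as it is
continuous and injective. For the extension of `κ` by `0` at `∞`, injectivity follows from
2-independence because `υ` has no zeros, and continuity at `∞`, tested coordinatewise in the
topology of pointwise convergence, is the condition that each `υ * f` vanishes at infinity.
Since `κ` itself is a continuous injection into a Hausdorff space, `X` is automatically Hausdorff.
-/

section OnePointExtension

variable {X Y : Type*} {κ : X → Y} {z : Y}

theorem injective_onePoint_elim_iff :
    Function.Injective (fun p : OnePoint X => p.elim z κ) ↔
      Function.Injective κ ∧ z ∉ Set.range κ :=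
  Option.injective_iff

variable [TopologicalSpace X] [TopologicalSpace Y]

theorem continuous_onePoint_elim_iff :
    Continuous (fun p : OnePoint X => p.elim z κ) ↔
      Tendsto κ (coclosedCompact X) (𝓝 z) ∧ Continuous κ :=
  OnePoint.continuous_iff _

theorem isEmbedding_onePoint_elim_iff_tendsto_cocompact [T2Space Y] (hκc : Continuous κ)
    (hκi : Function.Injective κ) (hz : z ∉ Set.range κ) :
    IsEmbedding (fun p : OnePoint X => p.elim z κ) ↔ Tendsto κ (cocompact X) (𝓝 z) := by
  have : T2Space X := .of_injective_continuous hκi hκc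
  rw [← coclosedCompact_eq_cocompact]
  constructor
  · intro h
    exact (continuous_onePoint_elim_iff.mp h.continuous).1
  · intro h
    have hc := continuous_onePoint_elim_iff.mpr ⟨h, hκc⟩
    have hi := injective_onePoint_elim_iff.mpr ⟨hκi, hz⟩
    exact (hc.isClosedEmbedding hi).isEmbedding

end OnePointExtension

theorem nontrivial_of_noncompactSpace (X : Type*) [TopologicalSpace X] [NoncompactSpace X] :
    Nontrivial X := by
  by_contra h
  have : Subsingleton X := not_nontrivial_iff_subsingleton.mp h
  exact noncompact_univ X Set.subsingleton_univ.isCompact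

section ScaledEval

variable {𝕜 X : Type*} [MulZeroClass 𝕜] [TopologicalSpace 𝕜] [TopologicalSpace X]

/-- The map `κ`, sending `x` to the `υ x`-multiple of evaluation at `x`. Its codomain is all of
`F → 𝕜`, whose product topology induces pointwise convergence on the algebraic dual. -/
def scaledEval (υ : X → 𝕜) (F : Set C(X, 𝕜)) : X → F → 𝕜 :=
  fun x f => υ x * (f : C(X, 𝕜)) x

variable {υ : X → 𝕜} {F : Set C(X, 𝕜)}

theorem continuous_scaledEval [ContinuousMul 𝕜] (hυc : Continuous υ) :
    Continuous (scaledEval υ F) :=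
  continuous_pi fun f => hυc.mul (f : C(X, 𝕜)).continuous

theorem tendsto_scaledEval_zero_iff {l : Filter X} :
    Tendsto (scaledEval υ F) l (𝓝 0) ↔ ∀ f ∈ F, Tendsto (fun x => υ x * f x) l (𝓝 0) :=
  tendsto_pi_nhds.trans Subtype.forall

variable [NoZeroDivisors 𝕜]

theorem scaledEval_injective (hυ0 : ∀ x, υ x ≠ 0)
    (hF : ∀ x y : X, x ≠ y → ∃ f ∈ F, f x ≠ 0 ∧ f y = 0) :
    Function.Injective (scaledEval υ F) := by
  intro x y hxy
  by_contra hne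
  obtain ⟨f, hf, hfx, hfy⟩ := hF x y hne
  have hmul : υ x * f x = υ y * f y := congrFun hxy ⟨f, hf⟩
  rw [hfy, mul_zero] at hmul
  exact mul_ne_zero (hυ0 x) hfx hmul

theorem zero_notMem_range_scaledEval (hυ0 : ∀ x, υ x ≠ 0) (hF : ∀ x, ∃ f ∈ F, f x ≠ 0) :
    0 ∉ Set.range (scaledEval υ F) := by
  rintro ⟨x, hx⟩
  obtain ⟨f, hf, hfx⟩ := hF x
  exact mul_ne_zero (hυ0 x) hfx (congrFun hx ⟨f, hf⟩)

theorem stmt9_general [ContinuousMul 𝕜] [T2Space 𝕜] [Nontrivial X]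
    (hF : ∀ x y : X, x ≠ y → ∃ f ∈ F, f x ≠ 0 ∧ f y = 0)
    (hυc : Continuous υ) (hυ0 : ∀ x, υ x ≠ 0) :
    IsEmbedding (fun p : OnePoint X => p.elim 0 (scaledEval υ F)) ↔
      ∀ f ∈ F, Tendsto (fun x => υ x * f x) (cocompact X) (𝓝 0) := by
  have hF0 (x : X) : ∃ f ∈ F, f x ≠ 0 := by
    obtain ⟨y, hyx⟩ := exists_ne x
    obtain ⟨f, hf, hfx, -⟩ := hF x y hyx.symm
    exact ⟨f, hf, hfx⟩
  rw [isEmbedding_onePoint_elim_iff_tendsto_cocompact (continuous_scaledEval hυc)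
    (scaledEval_injective hυ0 hF) (zero_notMem_range_scaledEval hυ0 hF0)]
  exact tendsto_scaledEval_zero_iff

end ScaledEval

/-- Let `X` be a non-compact locally compact Hausdorff space,
`𝕜 ∈ {ℝ, ℂ}`, `F ⊆ C(X,𝕜)` a 2-independent linear subspace, and `υ : X → 𝕜 \ {0}`
continuous. Let the algebraic dual of `F` carry the topology of pointwise convergence
(i.e. the subspace topology it inherits from the product topology on `F → 𝕜`), and define
`κ : X → (F → 𝕜)` by `κ(x)(f) = υ(x)·f(x)`. Then the extension of `κ` to the one-point
compactification of `X` sending `∞` to `0` is a topological embedding if and only if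
`υ·f ∈ C₀(X,𝕜)` for every `f ∈ F`. -/
theorem stmt9 {𝕜 X : Type*} [RCLike 𝕜]
    [TopologicalSpace X] [LocallyCompactSpace X] [T2Space X] [NoncompactSpace X]
    (F : Submodule 𝕜 C(X, 𝕜))
    (hF : ∀ x y : X, x ≠ y → ∃ f ∈ F, ∃ g ∈ F,
      f x = 1 ∧ f y = 0 ∧ g x = 0 ∧ g y = 1)
    (υ : X → 𝕜) (hυc : Continuous υ) (hυ0 : ∀ x, υ x ≠ 0) :
    Topology.IsEmbedding
        (fun p : OnePoint X =>
          p.elim (0 : F → 𝕜) (fun x => fun f : F => υ x * (f : C(X, 𝕜)) x)) ↔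
      ∀ f ∈ F, Tendsto (fun x => υ x * f x) (cocompact X) (𝓝 0) := by
  have := nontrivial_of_noncompactSpace X
  exact stmt9_general (F := (F : Set C(X, 𝕜)))
    (fun x y hxy => let ⟨f, hf, _, _, hfx, hfy, _⟩ := hF x y hxy
      ⟨f, hf, hfx.trans_ne one_ne_zero, hfy⟩) hυc hυ0
end

section
/- Let F and E be 2-independent normed spaces of continuous functions (NSCFs) over locally compact Hausdorff spaces X and Y respectively (scalars 𝔽 ∈ {ℝ, ℂ}), such that ‖y_E‖ → +∞ along the cocompact filter on Y. Let Φ : Y → X be continuous and ω : Y → 𝔽 be bounded, and suppose that W_{Φ,ω} (sending f to y ↦ ω(y)·f(Φ(y))) is a linear homeomorphism of F onto E (a bijective bounded linear operator with bounded inverse). Then Φ(Y) is closed in X and Φ is a topological embedding. -/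
open Filter Topology

/-!
Write `δ x` for the evaluation functional at `x`, pulled back to `E` along `W⁻¹`. The weighted
composition formula says that the evaluation functional of `E` at `y` is `ω y • δ (Φ y)`. Two points
with the same image under `Φ` therefore have proportional evaluation functionals, so `Φ` is
injective. As `ω` is bounded, `‖δ (Φ y)‖ → ∞` along the cocompact filter, whereas `‖δ ·‖` is bounded
on compact subsets of `X`; hence `Φ` is proper.
-/

section LinearIndependence

variable {R M : Type*} [CommRing R] [AddCommGroup M] [Module R M]

lemma linearIndependent_pair_of_exists_apply [TopologicalSpace R] [IsTopologicalRing R]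
    [TopologicalSpace M] {φ ψ : M →L[R] R}
    (h : ∃ x y, φ x = 1 ∧ ψ x = 0 ∧ φ y = 0 ∧ ψ y = 1) : LinearIndependent R ![φ, ψ] := by
  obtain ⟨x, y, hφx, hψx, hφy, hψy⟩ := h
  refine LinearIndependent.pair_iff.mpr fun a b hab => ?_
  have hx : (a • φ + b • ψ) x = 0 := DFunLike.congr_fun hab x
  have hy : (a • φ + b • ψ) y = 0 := DFunLike.congr_fun hab y
  exact ⟨by simpa [hφx, hψx] using hx, by simpa [hφy, hψy] using hy⟩

variable [Nontrivial R]

lemma not_linearIndependent_pair_smul_smul (a b : R) (v : M) :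
    ¬ LinearIndependent R ![a • v, b • v] := by
  intro h
  have hba : b • a • v + (-a) • b • v = 0 := by
    rw [neg_smul, smul_comm, add_neg_cancel]
  have ha : a = 0 := neg_eq_zero.mp (LinearIndependent.pair_iff.mp h b (-a) hba).2
  exact h.ne_zero 0 (by simp [ha])

lemma injective_of_pairwise_linearIndependent_smul_comp {X Y : Type*} {Φ : Y → X} {ω : Y → R}
    {v : X → M}
    (h : Pairwise fun y y' => LinearIndependent R ![ω y • v (Φ y), ω y' • v (Φ y')]) :
    Function.Injective Φ := by
  intro y y' hyy'
  by_contra hne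
  have hli : LinearIndependent R ![ω y • v (Φ y), ω y' • v (Φ y')] := h hne
  rw [hyy'] at hli
  exact not_linearIndependent_pair_smul_smul _ _ _ hli

end LinearIndependence

lemma isProperMap_of_tendsto_comp_atTop {X Y α : Type*} [TopologicalSpace X] [T2Space X]
    [CompactlyCoherentSpace X] [TopologicalSpace Y] [Preorder α] [NoMaxOrder α]
    {Φ : Y → X} (hΦ : Continuous Φ) {p : X → α}
    (hp : ∀ K : Set X, IsCompact K → BddAbove (p '' K))
    (h : Tendsto (p ∘ Φ) (cocompact Y) atTop) : IsProperMap Φ := by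
  refine isProperMap_iff_tendsto_cocompact.mpr
    ⟨hΦ, hasBasis_cocompact.tendsto_right_iff.mpr fun K hK => ?_⟩
  obtain ⟨C, hC⟩ := hp K hK
  filter_upwards [h.eventually_gt_atTop C] with y hy hyK
  exact hy.not_ge (hC (Set.mem_image_of_mem p hyK))

lemma tendsto_norm_atTop_of_smul {ι 𝕜 V : Type*} [SeminormedRing 𝕜] [SeminormedAddCommGroup V]
    [Module 𝕜 V] [IsBoundedSMul 𝕜 V] {l : Filter ι} {ω : ι → 𝕜} {v : ι → V} {M : ℝ}
    (hω : ∀ i, ‖ω i‖ ≤ M) (h : Tendsto (fun i => ‖ω i • v i‖) l atTop) :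
    Tendsto (fun i => ‖v i‖) l atTop := by
  have hle (i : ι) : ‖ω i • v i‖ ≤ max M 1 * ‖v i‖ :=
    (norm_smul_le _ _).trans (by gcongr; exact (hω i).trans (le_max_left M 1))
  exact (tendsto_atTop_mono hle h).atTop_of_const_mul₀ (by positivity)

lemma bddAbove_norm_evalCLM_comp {𝕜 X E V : Type*} [NontriviallyNormedField 𝕜]
    [TopologicalSpace X] [SeminormedAddCommGroup E] [NormedSpace 𝕜 E] [SeminormedAddCommGroup V]
    [NormedSpace 𝕜 V] (T : E →L[𝕜] C(X, V)) {K : Set X} (hK : IsCompact K) :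
    BddAbove ((fun x => ‖ContinuousMap.evalCLM 𝕜 x ∘L T‖) '' K) := by
  have : CompactSpace K := isCompact_iff_compactSpace.mp hK
  let restrictK : C(X, V) →L[𝕜] C(K, V) :=
    { toFun := ContinuousMap.restrict K
      map_add' := fun _ _ => rfl
      map_smul' := fun _ _ => rfl
      cont := ContinuousMap.continuous_restrict K }
  refine ⟨‖restrictK ∘L T‖, ?_⟩
  rintro _ ⟨x, hx, rfl⟩
  refine ContinuousLinearMap.opNorm_le_bound _ (norm_nonneg _) fun g => ?_
  calc ‖T g x‖ ≤ ‖(restrictK ∘L T) g‖ := ((restrictK ∘L T) g).norm_coe_le_norm ⟨x, hx⟩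
    _ ≤ ‖restrictK ∘L T‖ * ‖g‖ := (restrictK ∘L T).le_opNorm g

-- `T` is a continuous right inverse of the weighted composition operator `f ↦ ω • (f ∘ Φ)`.
theorem stmt15_general {𝕜 X Y E : Type*} [NontriviallyNormedField 𝕜] [TopologicalSpace X]
    [T2Space X] [CompactlyCoherentSpace X] [TopologicalSpace Y] [SeminormedAddCommGroup E]
    [NormedSpace 𝕜 E] {evE : Y → E →L[𝕜] 𝕜}
    (hE : Pairwise fun y y' => LinearIndependent 𝕜 ![evE y, evE y'])
    (hevinf : Tendsto (fun y => ‖evE y‖) (cocompact Y) atTop)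
    {Φ : Y → X} (hΦ : Continuous Φ) {ω : Y → 𝕜} (hω : ∃ M : ℝ, ∀ y, ‖ω y‖ ≤ M)
    (T : E →L[𝕜] C(X, 𝕜)) (hT : ∀ (g : E) (y : Y), evE y g = ω y * T g (Φ y)) :
    IsClosed (Set.range Φ) ∧ IsEmbedding Φ := by
  obtain ⟨M, hM⟩ := hω
  let δ (x : X) : E →L[𝕜] 𝕜 := ContinuousMap.evalCLM 𝕜 x ∘L T
  obtain rfl : evE = fun y => ω y • δ (Φ y) := by
    ext y g
    exact hT g y
  have hinj : Function.Injective Φ := injective_of_pairwise_linearIndependent_smul_comp hE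
  have hproper : IsProperMap Φ :=
    isProperMap_of_tendsto_comp_atTop hΦ (fun _ => bddAbove_norm_evalCLM_comp T)
      (tendsto_norm_atTop_of_smul hM hevinf)
  have hemb := IsClosedEmbedding.of_continuous_injective_isClosedMap hΦ hinj hproper.isClosedMap
  exact ⟨hemb.isClosed_range, hemb.isEmbedding⟩

/-- Let `F` and `E` be 2-independent normed spaces of continuous
functions over locally compact Hausdorff spaces `X` and `Y` respectively (realized via
injective continuous linear inclusions `JF : F →ₗ C(X,𝕜)` and `JE : E →ₗ C(Y,𝕜)`, with
bounded point evaluations `evE y : E →L[𝕜] 𝕜`), such that `‖evE y‖ → +∞` along the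
cocompact filter on `Y`. Let `Φ : Y → X` be continuous and `ω : Y → 𝕜` bounded, and
suppose `W : F ≃L[𝕜] E` is a linear homeomorphism acting by `(W f)(y) = ω(y)·f(Φ(y))`.
Then `Φ(Y)` is closed in `X` and `Φ` is a topological embedding. -/
theorem stmt15 {𝕜 X Y F E : Type*} [RCLike 𝕜]
    [TopologicalSpace X] [LocallyCompactSpace X] [T2Space X]
    [TopologicalSpace Y] [LocallyCompactSpace Y] [T2Space Y]
    [NormedAddCommGroup F] [NormedSpace 𝕜 F]
    [NormedAddCommGroup E] [NormedSpace 𝕜 E]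
    (JF : F →ₗ[𝕜] C(X, 𝕜)) (hJFinj : Function.Injective JF) (hJFcont : Continuous JF)
    (JE : E →ₗ[𝕜] C(Y, 𝕜)) (hJEinj : Function.Injective JE) (hJEcont : Continuous JE)
    (hFind : ∀ x x' : X, x ≠ x' → ∃ f g : F,
      JF f x = 1 ∧ JF f x' = 0 ∧ JF g x = 0 ∧ JF g x' = 1)
    (hEind : ∀ y y' : Y, y ≠ y' → ∃ f g : E,
      JE f y = 1 ∧ JE f y' = 0 ∧ JE g y = 0 ∧ JE g y' = 1)
    (evE : Y → E →L[𝕜] 𝕜) (hevE : ∀ (y : Y) (g : E), evE y g = JE g y)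
    (hevinf : Tendsto (fun y => ‖evE y‖) (cocompact Y) atTop)
    (Φ : Y → X) (hΦ : Continuous Φ)
    (ω : Y → 𝕜) (hω : ∃ M : ℝ, ∀ y, ‖ω y‖ ≤ M)
    (W : F ≃L[𝕜] E)
    (hW : ∀ (f : F) (y : Y), JE (W f) y = ω y * JF f (Φ y)) :
    IsClosed (Set.range Φ) ∧ Topology.IsEmbedding Φ := by
  have hind (y y' : Y) (hne : y ≠ y') : LinearIndependent 𝕜 ![evE y, evE y'] :=
    linearIndependent_pair_of_exists_apply (by simpa only [hevE] using hEind y y' hne)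
  exact stmt15_general hind hevinf hΦ hω (⟨JF, hJFcont⟩ ∘L (W.symm : E →L[𝕜] F))
    fun g y => by simpa [hevE] using hW (W.symm g) y
end

section
/- Let F be a normed space of continuous functions (NSCF) over a locally compact Hausdorff space X (scalars 𝔽 ∈ {ℝ, ℂ}) such that every point evaluation x_F is a nonzero functional, ‖x_F‖ → +∞ along the cocompact filter on X, and the set of bounded functions belonging to F is dense in F. Then for every f ∈ F, the quotient f(x)/‖x_F‖ tends to 0 along the cocompact filter on X (i.e., for every ε > 0 there is a compact K ⊂ X such that |f(x)|/‖x_F‖ ≤ ε for all x ∉ K). -/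
open Filter Topology

/-! The functionals `evF x / ‖evF x‖` have norm one, so the set of `f` along which they tend to `0`
is closed in `F`. It contains every bounded function because `‖evF x‖ → +∞`, and these are dense. -/

section

open Asymptotics

variable {ι 𝕜₁ 𝕜₂ E G H : Type*} [NontriviallyNormedField 𝕜₁] [NontriviallyNormedField 𝕜₂]
  {σ : 𝕜₁ →+* 𝕜₂} [RingHomIsometric σ]
  [SeminormedAddCommGroup E] [NormedSpace 𝕜₁ E] [SeminormedAddCommGroup G] [NormedSpace 𝕜₂ G]
  [SeminormedAddCommGroup H] {l : Filter ι} {φ : ι → E →SL[σ] G} {g : ι → H}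

theorem isClosed_setOfPred_isLittleO_apply (hφ : φ =O[l] g) :
    IsClosed {f : E | (fun i => φ i f) =o[l] g} := by
  refine isClosed_of_closure_subset fun f hf => isLittleO_iff.2 fun c hc => ?_
  obtain ⟨C, hC, hφC⟩ := hφ.exists_pos
  obtain ⟨f', hf', hff'⟩ := Metric.mem_closure_iff.1 hf (c / 2 / C) (by positivity)
  have hdist : C * ‖f - f'‖ ≤ c / 2 := by
    rw [← dist_eq_norm, mul_comm]
    exact ((lt_div_iff₀ hC).1 hff').le
  filter_upwards [hφC.bound, isLittleO_iff.1 hf' (half_pos hc)] with i hφi hf'i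
  calc ‖φ i f‖ ≤ ‖φ i (f - f')‖ + ‖φ i f'‖ := by
        rw [map_sub]
        exact norm_le_norm_sub_add _ _
    _ ≤ C * ‖g i‖ * ‖f - f'‖ + c / 2 * ‖g i‖ :=
        add_le_add ((φ i).le_of_opNorm_le hφi _) hf'i
    _ = (C * ‖f - f'‖ + c / 2) * ‖g i‖ := by ring
    _ ≤ (c / 2 + c / 2) * ‖g i‖ := by gcongr
    _ = c * ‖g i‖ := by rw [add_halves]

theorem isLittleO_apply_of_dense (hφ : φ =O[l] g)
    (hdense : Dense {f : E | (fun i => φ i f) =o[l] g}) (f : E) :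
    (fun i => φ i f) =o[l] g :=
  (isClosed_setOfPred_isLittleO_apply hφ).closure_subset (hdense f)

theorem stmt17_general (hφ : Tendsto (fun i => ‖φ i‖) l atTop)
    (hdense : Dense {f : E | IsBoundedUnder (· ≤ ·) l fun i => ‖φ i f‖}) (f : E) :
    (fun i => φ i f) =o[l] φ :=
  isLittleO_apply_of_dense (isBigO_refl φ l)
    (hdense.mono fun _ hf =>
      (hf.isBigO_one ℝ).trans_isLittleO ((isLittleO_one_left_iff ℝ).2 hφ)) f

end

/-- Let `F` be a normed space of continuous functions over a locally
compact Hausdorff space `X` (realized via an injective continuous linear inclusion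
`JF : F →ₗ C(X,𝕜)`, with bounded point evaluations `evF x : F →L[𝕜] 𝕜`) such that every
point evaluation is nonzero, `‖evF x‖ → +∞` along the cocompact filter on `X`, and the
bounded functions belonging to `F` form a dense subset of `F`. Then for every `f ∈ F`
the quotient `‖f(x)‖ / ‖evF x‖` tends to `0` along the cocompact filter on `X`. -/
theorem stmt17 {𝕜 X F : Type*} [RCLike 𝕜]
    [TopologicalSpace X] [LocallyCompactSpace X] [T2Space X]
    [NormedAddCommGroup F] [NormedSpace 𝕜 F]
    (JF : F →ₗ[𝕜] C(X, 𝕜)) (hJFinj : Function.Injective JF) (hJFcont : Continuous JF)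
    (evF : X → F →L[𝕜] 𝕜) (hevF : ∀ (x : X) (f : F), evF x f = JF f x)
    (hev0 : ∀ x : X, evF x ≠ 0)
    (hevinf : Tendsto (fun x => ‖evF x‖) (cocompact X) atTop)
    (hdense : Dense {f : F | ∃ M : ℝ, ∀ x : X, ‖JF f x‖ ≤ M}) :
    ∀ f : F, Tendsto (fun x => ‖JF f x‖ / ‖evF x‖) (cocompact X) (𝓝 0) := by
  simp only [← hevF] at hdense ⊢
  exact fun f => (stmt17_general hevinf
    (hdense.mono fun _ => isBoundedUnder_of) f).norm_norm.tendsto_div_nhds_zero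
end

section
/- Let Z ⊂ ℂ^n be a nonempty open connected set and let F be a collection of holomorphic functions on Z that separates the points of Z (for any distinct z, w ∈ Z there is f ∈ F with f(z) ≠ f(w)). Then there exist f₁, …, f_n ∈ F such that the holomorphic function z ↦ det[∂f_i/∂z_j(z)]_{i,j=1}^n (the determinant of the matrix of first-order complex partial derivatives) is not identically zero on Z. -/
/-!
If `f₁, …, f_r ∈ F` have independent differentials at a point `a` and `r < n`, then some `g ∈ F`
has a differential outside the span of the `df_i` at a point near `a`. Otherwise, all of `F` would
be constant along the local fibres of the submersion `(f₁, …, f_r)`, as `ker df ⊆ ker dg` near `a`.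
As these fibres have positive dimension, `F` would not separate their points. Starting from the
empty family, `n` such extensions give the required functions. Holomorphic functions are
continuously differentiable by Schwarz's lemma, applied to the difference of two translates.
-/

open Filter Function Metric Set Topology

section LinearAlgebra

variable {𝕜 E ι : Type*} [Field 𝕜] [TopologicalSpace 𝕜] [IsTopologicalRing 𝕜]
  [AddCommGroup E] [Module 𝕜 E] [TopologicalSpace E]

theorem range_pi_eq_top_of_linearIndependent [Finite ι] {L : ι → E →L[𝕜] 𝕜}
    (hL : LinearIndependent 𝕜 L) : (ContinuousLinearMap.pi L).range = ⊤ := by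
  have hcoe : LinearIndependent 𝕜 fun i ↦ ⇑(L i) :=
    hL.map' (LinearMap.ltoFun 𝕜 E 𝕜 𝕜 ∘ₗ ContinuousLinearMap.coeLM 𝕜) <|
      LinearMap.ker_eq_bot.2 DFunLike.coe_injective
  rw [eq_top_iff, ← span_flip_eq_top_iff_linearIndependent.2 hcoe, Submodule.span_le]
  rintro _ ⟨x, rfl⟩
  exact ⟨x, rfl⟩

theorem ker_pi_le_ker_of_mem_span [Finite ι] {L : ι → E →L[𝕜] 𝕜} {K : E →L[𝕜] 𝕜}
    (hK : K ∈ Submodule.span 𝕜 (range L)) : (ContinuousLinearMap.pi L).ker ≤ K.ker := by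
  have := Fintype.ofFinite ι
  obtain ⟨c, rfl⟩ := Submodule.mem_span_range_iff_exists_fun 𝕜 |>.1 hK
  intro v hv
  have hLv (i : ι) : L i v = 0 := congrFun hv i
  simp [hLv]

theorem det_apply_single_ne_zero_iff [Fintype ι] [DecidableEq ι]
    {L : ι → (ι → 𝕜) →L[𝕜] 𝕜} :
    (Matrix.of fun i j ↦ L i (Pi.single j 1)).det ≠ 0 ↔ LinearIndependent 𝕜 L := by
  let coords : ((ι → 𝕜) →L[𝕜] 𝕜) →ₗ[𝕜] ι → 𝕜 :=
    ((Pi.basisFun 𝕜 ι).constr 𝕜).symm.toLinearMap ∘ₗ ContinuousLinearMap.coeLM 𝕜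
  have hcoords : coords.ker = ⊥ := LinearMap.ker_eq_bot.2 <|
    ((Pi.basisFun 𝕜 ι).constr 𝕜).symm.injective.comp ContinuousLinearMap.coe_injective
  have hrow : (Matrix.of fun i j ↦ L i (Pi.single j 1)).row = coords ∘ L := by
    ext i j
    simp [coords, Module.Basis.constr, Matrix.row]
  rw [← isUnit_iff_ne_zero, ← Matrix.isUnit_iff_isUnit_det,
    ← Matrix.linearIndependent_rows_iff_isUnit, hrow, coords.linearIndependent_iff hcoords]

end LinearAlgebra

section NontriviallyNormedField

variable {𝕜 E F G H : Type*} [NontriviallyNormedField 𝕜]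
  [NormedAddCommGroup E] [NormedSpace 𝕜 E] [NormedAddCommGroup F] [NormedSpace 𝕜 F]
  [NormedAddCommGroup G] [NormedSpace 𝕜 G] [NormedAddCommGroup H] [NormedSpace 𝕜 H]

theorem ker_eq_bot_of_injOn_nhds [CompleteSpace E] [CompleteSpace F] {f : E → F}
    {f' : E →L[𝕜] F} {a : E} (hf : HasStrictFDerivAt f f' a) (hsurj : f'.range = ⊤)
    (hker : f'.ker.ClosedComplemented) {u : Set E} (hu : u ∈ 𝓝 a) (hinj : InjOn f u) :
    f'.ker = ⊥ := by
  set ψ : f'.ker → E := hf.implicitFunctionOfComplemented f f' hsurj hker (f a)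
  have hψ : HasFDerivAt ψ f'.ker.subtypeL 0 :=
    (hf.to_implicitFunctionOfComplemented hsurj hker).hasFDerivAt
  have hψ₀ : ψ 0 = a := hf.implicitFunctionOfComplemented_apply_image hsurj hker
  have hψu : ∀ᶠ y in 𝓝 0, ψ y ∈ u := hψ.continuousAt.eventually (hψ₀.symm ▸ hu)
  have hfψ : ∀ᶠ y in 𝓝 0, f (ψ y) = f a :=
    (hf.map_implicitFunctionOfComplemented_eq hsurj hker).curry_nhds.self_of_nhds
  have hψ_const : ψ =ᶠ[𝓝 0] fun _ ↦ a := by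
    filter_upwards [hψu, hfψ] with y hyu hy using hinj hyu (mem_of_mem_nhds hu) hy
  have hzero : f'.ker.subtypeL = 0 :=
    hψ.unique ((hasFDerivAt_const a 0).congr_of_eventuallyEq hψ_const)
  exact (Submodule.eq_bot_iff _).2 fun v hv ↦ by simpa using DFunLike.congr_fun hzero ⟨v, hv⟩

theorem hasFDerivAt_comp_prodMk_zero_of_ker_le {f : E → F} {g : E → H} {ψ : F × G → E} {c : F}
    {y : G} (hψ : DifferentiableAt 𝕜 ψ (c, y)) (hfψ : ∀ᶠ p in 𝓝 (c, y), f (ψ p) = p.1)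
    (hf : DifferentiableAt 𝕜 f (ψ (c, y))) (hg : DifferentiableAt 𝕜 g (ψ (c, y)))
    (hker : (fderiv 𝕜 f (ψ (c, y))).ker ≤ (fderiv 𝕜 g (ψ (c, y))).ker) :
    HasFDerivAt (fun w ↦ g (ψ (c, w))) (0 : G →L[𝕜] H) y := by
  have hslice : HasFDerivAt (fun w ↦ ψ (c, w))
      (fderiv 𝕜 ψ (c, y) ∘L .inr 𝕜 F G) y :=
    hψ.hasFDerivAt.comp y (hasFDerivAt_prodMk_right c y)
  have hf_zero : fderiv 𝕜 f (ψ (c, y)) ∘L fderiv 𝕜 ψ (c, y) ∘L .inr 𝕜 F G = 0 := by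
    have hconst : (fun w ↦ f (ψ (c, w))) =ᶠ[𝓝 y] fun _ ↦ c :=
      (Continuous.prodMk_right c).continuousAt.eventually hfψ
    exact (hf.hasFDerivAt.comp y hslice).unique
      ((hasFDerivAt_const c y).congr_of_eventuallyEq hconst)
  have hg_zero : fderiv 𝕜 g (ψ (c, y)) ∘L fderiv 𝕜 ψ (c, y) ∘L .inr 𝕜 F G = 0 := by
    ext1 v
    exact hker (DFunLike.congr_fun hf_zero v)
  exact hg_zero ▸ hg.hasFDerivAt.comp y hslice

theorem eventually_differentiableAt_of_contDiffAt {f : E → F} {a : E} {n : WithTop ℕ∞}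
    (hf : ContDiffAt 𝕜 n f a) (hn : 1 ≤ n) : ∀ᶠ z in 𝓝 a, DifferentiableAt 𝕜 f z :=
  ((hf.of_le hn).eventually (by simp)).mono fun _ hz ↦ hz.differentiableAt one_ne_zero

theorem eventually_linearIndependent_fderiv [CompleteSpace 𝕜] {ι : Type*} [Finite ι]
    {f : ι → E → F} {a : E} (hf : ∀ i, ContDiffAt 𝕜 1 (f i) a)
    (hind : LinearIndependent 𝕜 fun i ↦ fderiv 𝕜 (f i) a) :
    ∀ᶠ z in 𝓝 a, LinearIndependent 𝕜 fun i ↦ fderiv 𝕜 (f i) z :=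
  have := Fintype.ofFinite ι
  (continuousAt_pi.2 fun i ↦ (hf i).continuousAt_fderiv one_ne_zero).eventually hind.eventually

end NontriviallyNormedField

section RCLike

variable {𝕜 E F G H : Type*} [RCLike 𝕜] [NormedAddCommGroup E] [NormedSpace 𝕜 E] [CompleteSpace E]
  [NormedAddCommGroup F] [NormedSpace 𝕜 F] [NormedAddCommGroup G] [NormedSpace 𝕜 G]
  [NormedAddCommGroup H] [NormedSpace 𝕜 H]

theorem eventually_differentiableAt_mem_leftFun_implicitFunction [CompleteSpace F]
    [CompleteSpace G] {φ : ImplicitFunctionData 𝕜 E F G} (hleft : ContDiffAt 𝕜 1 φ.leftFun φ.pt)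
    (hright : ContDiffAt 𝕜 1 φ.rightFun φ.pt) {s : Set E} (hs : s ∈ 𝓝 φ.pt) :
    ∀ᶠ p in 𝓝 (φ.prodFun φ.pt), DifferentiableAt 𝕜 (uncurry φ.implicitFunction) p ∧
      uncurry φ.implicitFunction p ∈ s ∧
      ∀ᶠ q in 𝓝 p, φ.leftFun (uncurry φ.implicitFunction q) = q.1 := by
  have hψ : ContDiffAt 𝕜 1 (uncurry φ.implicitFunction) (φ.prodFun φ.pt) :=
    φ.contDiffAt_implicitFunction hleft hright one_ne_zero
  have hψ_pt : uncurry φ.implicitFunction (φ.prodFun φ.pt) = φ.pt :=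
    φ.implicitFunction_apply_image.self_of_nhds
  exact (eventually_differentiableAt_of_contDiffAt hψ le_rfl).and <|
    (hψ.continuousAt.eventually (hψ_pt.symm ▸ hs)).and φ.leftFun_implicitFunction.eventually_nhds

theorem exists_nhds_forall_eq_of_leftFun_eq [CompleteSpace F] [CompleteSpace G]
    {φ : ImplicitFunctionData 𝕜 E F G} (hleft : ContDiffAt 𝕜 1 φ.leftFun φ.pt)
    (hright : ContDiffAt 𝕜 1 φ.rightFun φ.pt) {s : Set E} (hs : s ∈ 𝓝 φ.pt) :
    ∃ u ∈ 𝓝 φ.pt, ∀ g : E → H, (∀ z ∈ s, DifferentiableAt 𝕜 g z) →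
      (∀ z ∈ s, (fderiv 𝕜 φ.leftFun z).ker ≤ (fderiv 𝕜 g z).ker) →
      ∀ x ∈ u, ∀ y ∈ u, φ.leftFun x = φ.leftFun y → g x = g y := by
  let ψ : F × G → E := uncurry φ.implicitFunction
  obtain ⟨ε, hε, hball⟩ := eventually_nhds_iff_ball.1 <|
    eventually_differentiableAt_mem_leftFun_implicitFunction hleft hright <|
      inter_mem hs (eventually_differentiableAt_of_contDiffAt hleft le_rfl)
  have hφ : ContinuousAt φ.prodFun φ.pt := φ.hasStrictFDerivAt.continuousAt
  refine ⟨{x | φ.prodFun x ∈ ball (φ.prodFun φ.pt) ε ∧ ψ (φ.prodFun x) = x},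
    (hφ.eventually (ball_mem_nhds _ hε)).and φ.implicitFunction_apply_image, ?_⟩
  rintro g hg hker x ⟨hx, hψx⟩ y ⟨hy, hψy⟩ hxy
  simp only [ImplicitFunctionData.prodFun_apply, ← ball_prod_same, mem_prod] at hball hx hy hψx hψy
  have hderiv : ∀ w ∈ ball (φ.rightFun φ.pt) ε,
      HasFDerivAt (fun w ↦ g (ψ (φ.leftFun x, w))) (0 : G →L[𝕜] H) w := by
    intro w hw
    obtain ⟨hψw, ⟨hws, hfw⟩, hfψ⟩ := hball (φ.leftFun x, w) ⟨hx.1, hw⟩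
    exact hasFDerivAt_comp_prodMk_zero_of_ker_le hψw hfψ hfw (hg _ hws) (hker _ hws)
  let : NormedSpace ℝ G := .restrictScalars ℝ 𝕜 G
  calc g x = g (ψ (φ.leftFun x, φ.rightFun x)) := by rw [hψx]
    _ = g (ψ (φ.leftFun x, φ.rightFun y)) :=
      isOpen_ball.is_const_of_fderiv_eq_zero (convex_ball _ _).isPreconnected
        (fun w hw ↦ (hderiv w hw).differentiableAt.differentiableWithinAt)
        (fun w hw ↦ (hderiv w hw).fderiv) hx.2 hy.2
    _ = g y := by rw [hxy, hψy]

theorem exists_nhds_forall_eq_of_ker_fderiv_le [CompleteSpace F] {f : E → F} {a : E}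
    (hf : ContDiffAt 𝕜 1 f a) (hsurj : (fderiv 𝕜 f a).range = ⊤)
    (hker : (fderiv 𝕜 f a).ker.ClosedComplemented) {s : Set E} (hs : s ∈ 𝓝 a) :
    ∃ u ∈ 𝓝 a, ∀ g : E → H, (∀ z ∈ s, DifferentiableAt 𝕜 g z) →
      (∀ z ∈ s, (fderiv 𝕜 f z).ker ≤ (fderiv 𝕜 g z).ker) →
      ∀ x ∈ u, ∀ y ∈ u, f x = f y → g x = g y :=
  let φ := (hf.hasStrictFDerivAt one_ne_zero).implicitFunctionDataOfComplemented f _ hsurj hker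
  have hright : ContDiffAt 𝕜 1 φ.rightFun φ.pt :=
    ((Classical.choose hker).contDiff.comp (contDiff_id.sub contDiff_const)).contDiffAt
  exists_nhds_forall_eq_of_leftFun_eq (φ := φ) hf hright hs

theorem exists_fderiv_notMem_span {Z : Set E} (hZ : IsOpen Z) {A : Set (E → 𝕜)}
    (hA : ∀ g ∈ A, DifferentiableOn 𝕜 g Z)
    (hsep : ∀ z ∈ Z, ∀ w ∈ Z, z ≠ w → ∃ g ∈ A, g z ≠ g w)
    {ι : Type*} [Finite ι] {f : ι → E → 𝕜} {a : E} (ha : a ∈ Z)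
    (hf : ∀ i, ContDiffAt 𝕜 1 (f i) a) (hind : LinearIndependent 𝕜 fun i ↦ fderiv 𝕜 (f i) a)
    (hker : (ContinuousLinearMap.pi fun i ↦ fderiv 𝕜 (f i) a).ker ≠ ⊥) :
    ∃ g ∈ A, ∃ z ∈ Z, LinearIndependent 𝕜 (fun i ↦ fderiv 𝕜 (f i) z) ∧
      fderiv 𝕜 g z ∉ Submodule.span 𝕜 (range fun i ↦ fderiv 𝕜 (f i) z) := by
  have := Fintype.ofFinite ι
  by_contra! hspan
  apply hker
  let f' : E → ι → 𝕜 := fun z i ↦ f i z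
  have hf' : ContDiffAt 𝕜 1 f' a := contDiffAt_pi.2 hf
  have hfa : fderiv 𝕜 f' a = .pi fun i ↦ fderiv 𝕜 (f i) a :=
    fderiv_pi fun i ↦ (hf i).differentiableAt one_ne_zero
  have hsurj : (fderiv 𝕜 f' a).range = ⊤ := hfa ▸ range_pi_eq_top_of_linearIndependent hind
  have hcompl := (fderiv 𝕜 f' a).ker_closedComplemented_of_finiteDimensional_range
  have hker_le : ∀ᶠ z in 𝓝 a, z ∈ Z ∧ ∀ g ∈ A, (fderiv 𝕜 f' z).ker ≤ (fderiv 𝕜 g z).ker := by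
    filter_upwards [hZ.eventually_mem ha, eventually_linearIndependent_fderiv hf hind,
      eventually_differentiableAt_of_contDiffAt hf' le_rfl] with z hz hzind hzdiff
    refine ⟨hz, fun g hg ↦ ?_⟩
    rw [fderiv_pi (differentiableAt_pi.1 hzdiff)]
    exact ker_pi_le_ker_of_mem_span (hspan g hg z hz hzind)
  obtain ⟨u, hu, hconst⟩ := exists_nhds_forall_eq_of_ker_fderiv_le (H := 𝕜) hf' hsurj hcompl hker_le
  have hinj : InjOn f' (u ∩ Z) := by
    rintro x ⟨hxu, hxZ⟩ y ⟨hyu, hyZ⟩ hxy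
    by_contra hne
    obtain ⟨g, hg, hgne⟩ := hsep x hxZ y hyZ hne
    exact hgne <| hconst g (fun z hz ↦ (hA g hg).differentiableAt (hZ.mem_nhds hz.1))
      (fun z hz ↦ hz.2 g hg) x hxu y hyu hxy
  exact hfa ▸ ker_eq_bot_of_injOn_nhds (hf'.hasStrictFDerivAt one_ne_zero) hsurj hcompl
    (inter_mem hu (hZ.mem_nhds ha)) hinj

end RCLike

theorem exists_linearIndependent_fderiv {𝕜 E : Type*} [RCLike 𝕜] [NormedAddCommGroup E]
    [NormedSpace 𝕜 E] [FiniteDimensional 𝕜 E] {Z : Set E} (hZ : IsOpen Z) (hZne : Z.Nonempty)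
    {A : Set (E → 𝕜)} (hA : ∀ g ∈ A, ContDiffOn 𝕜 1 g Z)
    (hsep : ∀ z ∈ Z, ∀ w ∈ Z, z ≠ w → ∃ g ∈ A, g z ≠ g w) {r : ℕ}
    (hr : r ≤ Module.finrank 𝕜 E) :
    ∃ f : Fin r → E → 𝕜, (∀ i, f i ∈ A) ∧
      ∃ z ∈ Z, LinearIndependent 𝕜 fun i ↦ fderiv 𝕜 (f i) z := by
  have := FiniteDimensional.complete 𝕜 E
  induction r with
  | zero =>
    exact ⟨Fin.elim0, fun i ↦ i.elim0, hZne.some, hZne.some_mem, linearIndependent_empty_type⟩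
  | succ r ih =>
    obtain ⟨f, hfA, a, ha, hind⟩ := ih (by lia)
    have hker : (ContinuousLinearMap.pi fun i ↦ fderiv 𝕜 (f i) a).ker ≠ ⊥ :=
      LinearMap.ker_ne_bot_of_finrank_lt (by simpa using hr)
    obtain ⟨g, hg, z, hz, hzind, hgz⟩ := exists_fderiv_notMem_span hZ
      (fun g hg ↦ (hA g hg).differentiableOn one_ne_zero) hsep ha
      (fun i ↦ (hA _ (hfA i)).contDiffAt (hZ.mem_nhds ha)) hind hker
    refine ⟨Fin.cons g f, Fin.cases hg hfA, z, hz, ?_⟩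
    have hcons : (fun i ↦ fderiv 𝕜 ((Fin.cons g f : Fin (r + 1) → E → 𝕜) i) z) =
        Fin.cons (fderiv 𝕜 g z) fun i ↦ fderiv 𝕜 (f i) z :=
      funext <| Fin.cases rfl fun _ ↦ rfl
    exact hcons ▸ linearIndependent_finCons.2 ⟨hzind, hgz⟩

section Holomorphic

variable {E F : Type*} [NormedAddCommGroup E] [NormedSpace ℂ E] [NormedAddCommGroup F]
  [NormedSpace ℂ F] {f : E → F}

theorem dist_fderiv_le_of_forall_ball_dist_le {a b : E} {R M : ℝ} (hR : 0 < R)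
    (ha : DifferentiableOn ℂ f (ball a R)) (hb : DifferentiableOn ℂ f (ball b R))
    (hM : ∀ x ∈ ball 0 R, dist (f (b + x)) (f (a + x)) ≤ M) :
    dist (fderiv ℂ f b) (fderiv ℂ f a) ≤ 2 * M / R := by
  let h : E → F := fun x ↦ f (b + x) - f (a + x)
  have hdiff {c : E} (hc : DifferentiableOn ℂ f (ball c R)) {x : E} (hx : x ∈ ball 0 R) :
      DifferentiableAt ℂ (fun x ↦ f (c + x)) x :=
    (differentiableAt_comp_add_left c).2 <|
      hc.differentiableAt (isOpen_ball.mem_nhds (by simpa using hx))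
  have h_fderiv : fderiv ℂ h 0 = fderiv ℂ f b - fderiv ℂ f a := by
    rw [fderiv_fun_sub (hdiff hb (mem_ball_self hR)) (hdiff ha (mem_ball_self hR)),
      fderiv_comp_add_left, fderiv_comp_add_left, add_zero, add_zero]
  have h_norm {x : E} (hx : x ∈ ball 0 R) : ‖h x‖ ≤ M := dist_eq_norm (f (b + x)) _ ▸ hM x hx
  have h_maps : MapsTo h (ball 0 R) (closedBall (h 0) (2 * M)) := fun x hx ↦
    calc dist (h x) (h 0) ≤ ‖h x‖ + ‖h 0‖ := dist_le_norm_add_norm _ _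
      _ ≤ M + M := add_le_add (h_norm hx) (h_norm (mem_ball_self hR))
      _ = 2 * M := (two_mul M).symm
  rw [dist_eq_norm, ← h_fderiv]
  exact Complex.norm_fderiv_le_div_of_mapsTo_ball
    (fun x hx ↦ ((hdiff hb hx).sub (hdiff ha hx)).differentiableWithinAt) h_maps hR

theorem continuousOn_fderiv_of_differentiableOn [ProperSpace E] {Z : Set E}
    (hf : DifferentiableOn ℂ f Z) (hZ : IsOpen Z) : ContinuousOn (fderiv ℂ f) Z := by
  refine fun a ha ↦ ContinuousAt.continuousWithinAt ?_
  obtain ⟨R, hR, hRZ⟩ := nhds_basis_closedBall.mem_iff.1 (hZ.mem_nhds ha)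
  have hunif : UniformContinuousOn f (closedBall a R) :=
    (isCompact_closedBall a R).uniformContinuousOn_of_continuous (hf.continuousOn.mono hRZ)
  have hsub {b : E} (hb : dist b a ≤ R / 2) : ball b (R / 2) ⊆ closedBall a R :=
    ball_subset_closedBall.trans <| closedBall_subset_closedBall' (by linarith)
  have ha₀ : dist a a ≤ R / 2 := by simpa using (half_pos hR).le
  rw [Metric.continuousAt_iff]
  intro ε hε
  obtain ⟨δ, hδ, hfδ⟩ := Metric.uniformContinuousOn_iff.1 hunif (ε * R / 8) (by positivity)
  refine ⟨min δ (R / 2), by positivity, fun {b} hb ↦ ?_⟩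
  have hbR : dist b a ≤ R / 2 := (hb.trans_le (min_le_right _ _)).le
  have hM : ∀ x ∈ ball 0 (R / 2), dist (f (b + x)) (f (a + x)) ≤ ε * R / 8 := fun x hx ↦
    (hfδ _ (hsub hbR (by simpa using hx)) _ (hsub ha₀ (by simpa using hx))
      (by simpa using hb.trans_le (min_le_left _ _))).le
  calc dist (fderiv ℂ f b) (fderiv ℂ f a) ≤ 2 * (ε * R / 8) / (R / 2) :=
        dist_fderiv_le_of_forall_ball_dist_le (by positivity)
          (hf.mono ((hsub ha₀).trans hRZ)) (hf.mono ((hsub hbR).trans hRZ)) hM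
    _ = ε / 2 := by field
    _ < ε := half_lt_self hε

theorem contDiffOn_one_of_differentiableOn [ProperSpace E] {Z : Set E}
    (hf : DifferentiableOn ℂ f Z) (hZ : IsOpen Z) : ContDiffOn ℂ 1 f Z := by
  rw [← zero_add 1, contDiffOn_succ_iff_fderiv_of_isOpen hZ]
  exact ⟨hf, by simp, contDiffOn_zero.2 (continuousOn_fderiv_of_differentiableOn hf hZ)⟩

end Holomorphic

theorem stmt18_general {𝕜 : Type*} [RCLike 𝕜] {n : ℕ} (Z : Set (Fin n → 𝕜)) (hZo : IsOpen Z)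
    (hZne : Z.Nonempty) (F : Set ((Fin n → 𝕜) → 𝕜)) (hF : ∀ f ∈ F, ContDiffOn 𝕜 1 f Z)
    (hFsep : ∀ z ∈ Z, ∀ w ∈ Z, z ≠ w → ∃ f ∈ F, f z ≠ f w) :
    ∃ f : Fin n → ((Fin n → 𝕜) → 𝕜), (∀ i, f i ∈ F) ∧
      ∃ z ∈ Z, Matrix.det (Matrix.of fun i j : Fin n =>
        fderiv 𝕜 (f i) z (Pi.single j 1)) ≠ 0 := by
  simpa only [det_apply_single_ne_zero_iff] using
    exists_linearIndependent_fderiv hZo hZne hF hFsep (Module.finrank_fin_fun 𝕜).ge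

/-- Let `Z ⊆ ℂ^n` be a nonempty open connected set and let `F` be a
collection of holomorphic functions on `Z` separating the points of `Z`. Then there are
`f₁, …, f_n ∈ F` such that the holomorphic function
`z ↦ det [∂f_i/∂z_j (z)]_{i,j=1}^n` is not identically zero on `Z`. -/
theorem stmt18 {n : ℕ} (Z : Set (Fin n → ℂ)) (hZo : IsOpen Z) (hZc : IsConnected Z)
    (F : Set ((Fin n → ℂ) → ℂ))
    (hFhol : ∀ f ∈ F, DifferentiableOn ℂ f Z)
    (hFsep : ∀ z ∈ Z, ∀ w ∈ Z, z ≠ w → ∃ f ∈ F, f z ≠ f w) :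
    ∃ f : Fin n → ((Fin n → ℂ) → ℂ), (∀ i, f i ∈ F) ∧
      ∃ z ∈ Z, Matrix.det (Matrix.of fun i j : Fin n =>
        fderiv ℂ (f i) z (Pi.single j 1)) ≠ 0 :=
  stmt18_general Z hZo hZc.nonempty F
    (fun f hf ↦ contDiffOn_one_of_differentiableOn (hFhol f hf) hZo) hFsep
end

section
/- Let X ⊂ ℂ^d and Y ⊂ ℂ^m be nonempty open connected sets, and let F be a collection of holomorphic functions on X that separates the points of X. If Φ : Y → X is a continuous map such that f ∘ Φ is holomorphic on Y for every f ∈ F, then Φ is holomorphic on Y (as a map into ℂ^d). -/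
/-!
By Osgood's lemma (a continuous map which is holomorphic along complex lines is holomorphic) it
suffices to restrict `Φ` to complex lines, that is, to let its domain be a disc `D`. Call a
holomorphic function `h` on `X` pullback-holomorphic if `h ∘ Φ` is holomorphic. The main step is to
find pullback-holomorphic functions, one for each coordinate, whose Jacobian does not vanish
identically on `Φ '' D`. Start from the identity and exchange its coordinates one at a time. If the
`j`-th one cannot be exchanged, then for every pullback-holomorphic `h` the Jacobian with `h` in
place of the `j`-th coordinate vanishes on `Φ '' D`, and so is again pullback-holomorphic. Up to a
nonvanishing factor it is the derivative of `h` along the `j`-th coordinate curve. Hence on the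
coordinate curve through a suitable point of `Φ '' D` all derivatives of pullback-holomorphic
functions vanish at that point, and no member of `F` separates the points of this curve.

With such functions as local coordinates, `Φ` is holomorphic off the zeros of a Jacobian, and
continuous everywhere. Radó's theorem removes these zeros. To prove it, consider functions `g`
continuous on a closed disc and holomorphic inside it off the zeros of `u`. The maximum principle
for `g ^ n * u` bounds `g` by its values on the circle. Since the real part of `g` on the circle is
a uniform limit of real parts of polynomials, `g` has the mean value property at the centre `c`.
Applied to `(z - c) * dslope g α z`, this is Cauchy's formula for `g` at `α`.
-/

open Metric Set Filter Topology Complex Function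

/-! ### Osgood's lemma -/

section Osgood

theorem ball_subset_ball_two_mul {E : Type*} [PseudoMetricSpace E] {x z : E} {r : ℝ}
    (hx : x ∈ ball z r) : ball x r ⊆ ball z (2 * r) :=
  ball_subset_ball' (by rw [mem_ball] at hx; linarith)

theorem exists_ball_norm_le {E F : Type*} [PseudoMetricSpace E] [SeminormedAddGroup F]
    {f : E → F} {U : Set E} {z : E} (hf : ContinuousOn f U) (hU : IsOpen U) (hz : z ∈ U) :
    ∃ r > 0, ∃ M, ball z r ⊆ U ∧ ∀ x ∈ ball z r, ‖f x‖ ≤ M := by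
  have hbdd : ∀ᶠ x in 𝓝 z, x ∈ U ∧ ‖f x‖ < ‖f z‖ + 1 := (hU.eventually_mem hz).and <|
    (hf.continuousAt (hU.mem_nhds hz)).norm.eventually_lt_const (lt_add_one _)
  obtain ⟨r, hr, hball⟩ := Metric.eventually_nhds_iff_ball.1 hbdd
  exact ⟨r, hr, ‖f z‖ + 1, fun x hx => (hball x hx).1, fun x hx => (hball x hx).2.le⟩

variable {E F : Type*} [NormedAddCommGroup E] [NormedSpace ℂ E]
  [NormedAddCommGroup F] [NormedSpace ℂ F] {f : E → F} {U : Set E} {z v w : E} {r M : ℝ}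

theorem eventually_norm_smul_lt (hr : 0 < r) (v : E) : ∀ᶠ t : ℂ in 𝓝 0, ‖t • v‖ < r :=
  (by fun_prop : ContinuousAt (fun t : ℂ => ‖t • v‖) 0).eventually_lt_const (by simpa)

/-- Gâteaux holomorphy on `U`: complex differentiability along every complex line through a point
of `U`. -/
def GateauxHolomorphicOn (f : E → F) (U : Set E) : Prop :=
  ∀ z ∈ U, ∀ v, LineDifferentiableAt ℂ f z v

namespace GateauxHolomorphicOn

theorem mono {V : Set E} (hf : GateauxHolomorphicOn f U) (hVU : V ⊆ U) :
    GateauxHolomorphicOn f V := fun z hz => hf z (hVU hz)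

theorem sub {g : E → F} (hf : GateauxHolomorphicOn f U) (hg : GateauxHolomorphicOn g U) :
    GateauxHolomorphicOn (fun x => f x - g x) U := fun z hz v =>
  DifferentiableAt.fun_sub (hf z hz v) (hg z hz v)

theorem comp_add_right (hf : GateauxHolomorphicOn f U) (w : E) :
    GateauxHolomorphicOn (fun x => f (x + w)) {x | x + w ∈ U} := fun z hz v => by
  simpa only [LineDifferentiableAt, add_right_comm] using hf (z + w) hz v

theorem differentiableAt_comp_line (hf : GateauxHolomorphicOn f U) {t : ℂ} (ht : z + t • v ∈ U) :
    DifferentiableAt ℂ (fun s : ℂ => f (z + s • v)) t := by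
  have h : DifferentiableAt ℂ (fun s : ℂ => f (z + t • v + s • v)) (t - t) := by
    rw [sub_self]
    exact hf _ ht v
  simpa only [add_assoc, ← add_smul, add_sub_cancel] using differentiableAt_comp_sub_const.2 h

theorem norm_add_sub_le (hf : GateauxHolomorphicOn f (ball z r))
    (hM : ∀ x ∈ ball z r, ‖f x‖ ≤ M) (hv : ‖v‖ < r) :
    ‖f (z + v) - f z‖ ≤ 2 * M / r * ‖v‖ := by
  rcases eq_or_ne v 0 with rfl | hv0
  · simp
  have hv' : 0 < ‖v‖ := norm_pos_iff.2 hv0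
  have hmem : ∀ t ∈ ball (0 : ℂ) (r / ‖v‖), z + t • v ∈ ball z r := fun t ht => by
    rw [mem_ball_zero_iff, lt_div_iff₀ hv'] at ht
    rwa [mem_ball, dist_self_add_left, norm_smul]
  have hz : z ∈ ball z r := mem_ball_self (hv'.trans hv)
  have h := Complex.dist_le_div_mul_dist_of_mapsTo_ball (R₂ := 2 * M) (z := 1)
    (fun t ht => (hf.differentiableAt_comp_line (hmem t ht)).differentiableWithinAt)
    (fun t ht => by
      rw [mem_closedBall, dist_eq_norm, two_mul]
      simpa only [zero_smul, add_zero] using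
        norm_sub_le_of_le (hM _ (hmem t ht)) (hM _ hz))
    (by rwa [mem_ball_zero_iff, norm_one, one_lt_div hv'])
  simpa [dist_eq_norm, div_div_eq_mul_div, mul_div_right_comm] using h

theorem norm_second_difference_le (hf : GateauxHolomorphicOn f (ball z (2 * r)))
    (hM : ∀ x ∈ ball z (2 * r), ‖f x‖ ≤ M) (hv : ‖v‖ < r) (hw : ‖w‖ < r) :
    ‖f (z + v + w) - f (z + v) - (f (z + w) - f z)‖ ≤ 4 * M / r ^ 2 * (‖v‖ * ‖w‖) := by
  have hsub : ∀ x ∈ ball z r, ball x r ⊆ ball z (2 * r) := fun _ => ball_subset_ball_two_mul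
  have hr : 0 < r := (norm_nonneg v).trans_lt hv
  have hdiff : GateauxHolomorphicOn (fun x => f (x + w) - f x) (ball z r) :=
    ((hf.comp_add_right w).mono fun x hx => hsub x hx <| by
      rwa [mem_ball, dist_self_add_left]).sub (hf.mono (ball_subset_ball (by linarith)))
  have hbound : ∀ x ∈ ball z r, ‖f (x + w) - f x‖ ≤ 2 * M / r * ‖w‖ := fun x hx =>
    (hf.mono (hsub x hx)).norm_add_sub_le (fun y hy => hM y (hsub x hx hy)) hw
  refine (hdiff.norm_add_sub_le hbound hv).trans_eq ?_
  field_simp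
  ring

end GateauxHolomorphicOn

theorem norm_sub_sub_smul_deriv_le [CompleteSpace F] {g : ℂ → F} {c t : ℂ}
    (hg : DifferentiableOn ℂ g (ball c r)) (hM : ∀ s ∈ ball c r, ‖g s‖ ≤ M) (ht : t ∈ ball c r) :
    ‖g t - g c - (t - c) • deriv g c‖ ≤ 4 * M / r ^ 2 * ‖t - c‖ ^ 2 := by
  have hr : 0 < r := pos_of_mem_ball ht
  have hc : ball c r ∈ 𝓝 c := ball_mem_nhds c hr
  have hslope : ∀ s ∈ ball c r, ‖dslope g c s‖ ≤ 2 * M / r := fun s hs =>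
    Complex.norm_dslope_le_div_of_mapsTo_ball hg (fun s hs => by
      rw [mem_closedBall, dist_eq_norm, two_mul]
      exact norm_sub_le_of_le (hM s hs) (hM c (mem_of_mem_nhds hc))) hs
  have hslope₂ : ‖dslope (dslope g c) c t‖ ≤ 2 * (2 * M / r) / r :=
    Complex.norm_dslope_le_div_of_mapsTo_ball ((Complex.differentiableOn_dslope hc).2 hg)
      (fun s hs => by
        rw [mem_closedBall, dist_eq_norm, two_mul]
        exact norm_sub_le_of_le (hslope s hs) (hslope c (mem_of_mem_nhds hc))) ht
  have htaylor : g t - g c - (t - c) • deriv g c = (t - c) ^ 2 • dslope (dslope g c) c t := by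
    rw [pow_two, mul_smul, sub_smul_dslope, smul_sub, sub_smul_dslope, dslope_same]
  calc ‖g t - g c - (t - c) • deriv g c‖
      = ‖t - c‖ ^ 2 * ‖dslope (dslope g c) c t‖ := by rw [htaylor, norm_smul, norm_pow]
    _ ≤ ‖t - c‖ ^ 2 * (2 * (2 * M / r) / r) := by gcongr
    _ = 4 * M / r ^ 2 * ‖t - c‖ ^ 2 := by field_simp; ring

namespace GateauxHolomorphicOn

theorem norm_add_sub_sub_lineDeriv_le [CompleteSpace F] (hf : GateauxHolomorphicOn f (ball z r))
    (hM : ∀ x ∈ ball z r, ‖f x‖ ≤ M) (hv : ‖v‖ < r) :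
    ‖f (z + v) - f z - lineDeriv ℂ f z v‖ ≤ 4 * M / r ^ 2 * ‖v‖ ^ 2 := by
  rcases eq_or_ne v 0 with rfl | hv0
  · simp [lineDeriv_zero]
  have hv' : 0 < ‖v‖ := norm_pos_iff.2 hv0
  have hmem : ∀ t ∈ ball (0 : ℂ) (r / ‖v‖), z + t • v ∈ ball z r := fun t ht => by
    rw [mem_ball_zero_iff, lt_div_iff₀ hv'] at ht
    rwa [mem_ball, dist_self_add_left, norm_smul]
  have h := norm_sub_sub_smul_deriv_le (t := 1)
    (fun t ht => (hf.differentiableAt_comp_line (hmem t ht)).differentiableWithinAt)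
    (fun t ht => hM _ (hmem t ht)) (by rwa [mem_ball_zero_iff, norm_one, one_lt_div hv'])
  simpa [lineDeriv, div_pow, div_div_eq_mul_div, mul_div_right_comm] using h

theorem norm_smul_sub_sub_lineDeriv_le [CompleteSpace F] (hf : GateauxHolomorphicOn f (ball z r))
    (hM : ∀ x ∈ ball z r, ‖f x‖ ≤ M) {t : ℂ} (ht₀ : t ≠ 0) (ht : ‖t • v‖ < r) :
    ‖t⁻¹ • (f (z + t • v) - f z) - lineDeriv ℂ f z v‖ ≤ 4 * M / r ^ 2 * ‖v‖ ^ 2 * ‖t‖ := by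
  have hscale : t⁻¹ • (f (z + t • v) - f z) - lineDeriv ℂ f z v =
      t⁻¹ • (f (z + t • v) - f z - lineDeriv ℂ f z (t • v)) := by
    rw [lineDeriv_smul, smul_sub _ (f (z + t • v) - f z), inv_smul_smul₀ ht₀]
  calc ‖t⁻¹ • (f (z + t • v) - f z) - lineDeriv ℂ f z v‖
      = ‖t‖⁻¹ * ‖f (z + t • v) - f z - lineDeriv ℂ f z (t • v)‖ := by
        rw [hscale, norm_smul, norm_inv]
    _ ≤ ‖t‖⁻¹ * (4 * M / r ^ 2 * ‖t • v‖ ^ 2) := by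
        gcongr
        exact hf.norm_add_sub_sub_lineDeriv_le hM ht
    _ = 4 * M / r ^ 2 * ‖v‖ ^ 2 * ‖t‖ := by
        have := norm_ne_zero_iff.2 ht₀
        rw [norm_smul]
        field_simp

theorem lineDeriv_add (hf : GateauxHolomorphicOn f (ball z r))
    (hM : ∀ x ∈ ball z r, ‖f x‖ ≤ M) (hr : 0 < r) (v w : E) :
    lineDeriv ℂ f z (v + w) = lineDeriv ℂ f z v + lineDeriv ℂ f z w := by
  have hz : z ∈ ball z r := mem_ball_self hr
  have hdiff : HasFDerivAt (fun t : ℂ => f (z + t • v + t • w) - f (z + t • v) -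
      (f (z + t • w) - f z)) (0 : ℂ →L[ℂ] F) 0 := by
    refine Asymptotics.IsBigO.hasFDerivAt (n := 2) (.of_bound (4 * M / (r / 2) ^ 2 * (‖v‖ * ‖w‖))
      ?_) one_lt_two
    filter_upwards [eventually_norm_smul_lt (half_pos hr) v,
      eventually_norm_smul_lt (half_pos hr) w] with t hv hw
    refine (norm_second_difference_le (by rwa [mul_div_cancel₀ r two_ne_zero])
      (by rwa [mul_div_cancel₀ r two_ne_zero]) hv hw).trans_eq ?_
    simp only [norm_smul, sub_zero, norm_pow, norm_norm]
    ring
  have hline := ((hf z hz (v + w)).hasLineDerivAt.fun_sub (hf z hz v).hasLineDerivAt).fun_sub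
    ((hf z hz w).hasLineDerivAt.sub_const (f z))
  simp only [smul_add, ← add_assoc] at hline
  exact eq_add_of_sub_eq' (sub_eq_zero.1 (hline.unique hdiff.hasDerivAt))

theorem differentiableAt_of_norm_le [CompleteSpace F] (hf : GateauxHolomorphicOn f (ball z r))
    (hr : 0 < r) (hM : ∀ x ∈ ball z r, ‖f x‖ ≤ M) : DifferentiableAt ℂ f z := by
  have hlip : ∀ᶠ x in 𝓝 z, ‖f x - f z‖ ≤ 2 * M / r * ‖x - z‖ := by
    filter_upwards [ball_mem_nhds z hr] with x hx
    simpa using hf.norm_add_sub_le hM (mem_ball_iff_norm.1 hx)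
  have hM₀ : 0 ≤ M := (norm_nonneg _).trans (hM z (mem_ball_self hr))
  let f' : E →L[ℂ] F := LinearMap.mkContinuous
    { toFun := lineDeriv ℂ f z
      map_add' := hf.lineDeriv_add hM hr
      map_smul' := fun _ _ => lineDeriv_smul } (2 * M / r)
    fun _ => norm_lineDeriv_le_of_lip' ℂ (by positivity) hlip
  refine ⟨f', .of_isLittleO <| Asymptotics.IsBigO.trans_isLittleO (g := fun x => ‖x - z‖ ^ 2)
    (.of_bound (4 * M / r ^ 2) ?_) ?_⟩
  · filter_upwards [ball_mem_nhds z hr] with x hx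
    simpa [f'] using hf.norm_add_sub_sub_lineDeriv_le hM (mem_ball_iff_norm.1 hx)
  · exact Asymptotics.isLittleO_pow_sub_sub z one_lt_two

theorem differentiableOn [CompleteSpace F] (hf : GateauxHolomorphicOn f U) (hU : IsOpen U)
    (hc : ContinuousOn f U) : DifferentiableOn ℂ f U := fun z hz => by
  obtain ⟨r, hr, M, hrU, hM⟩ := exists_ball_norm_le hc hU hz
  exact ((hf.mono hrU).differentiableAt_of_norm_le hr hM).differentiableWithinAt

end GateauxHolomorphicOn

theorem gateauxHolomorphicOn_of_differentiableOn (hf : DifferentiableOn ℂ f U) (hU : IsOpen U) :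
    GateauxHolomorphicOn f U := fun _ hz _ =>
  (hf.differentiableAt (hU.mem_nhds hz)).lineDifferentiableAt

theorem differentiableOn_of_tendstoUniformlyOn [CompleteSpace F] {ι : Type*} {l : Filter ι}
    [l.NeBot] {G : ι → E → F} (hG : TendstoUniformlyOn G f l U)
    (hd : ∀ᶠ i in l, DifferentiableOn ℂ (G i) U) (hU : IsOpen U) : DifferentiableOn ℂ f U := by
  refine GateauxHolomorphicOn.differentiableOn (fun z hz v => ?_) hU
    (hG.continuousOn (hd.mono fun i hi => hi.continuousOn).frequently)
  have hline : DifferentiableOn ℂ (f ∘ fun t : ℂ => z + t • v) ((fun t : ℂ => z + t • v) ⁻¹' U) :=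
    (hG.comp _).tendstoLocallyUniformlyOn.differentiableOn
      (hd.mono fun i hi => hi.comp (by fun_prop) (mapsTo_preimage _ _))
      (hU.preimage (by fun_prop))
  exact hline.differentiableAt ((hU.preimage (by fun_prop)).mem_nhds (by simpa))

theorem tendstoUniformlyOn_smul_sub [CompleteSpace F] (hf : DifferentiableOn ℂ f (ball z (2 * r)))
    (hM : ∀ x ∈ ball z (2 * r), ‖f x‖ ≤ M) (hr : 0 < r) (v : E) :
    TendstoUniformlyOn (fun (t : ℂ) x => t⁻¹ • (f (x + t • v) - f x))
      (fun x => fderiv ℂ f x v) (𝓝[≠] 0) (ball z r) := by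
  rw [Metric.tendstoUniformlyOn_iff]
  intro ε hε
  have hlim : Tendsto (fun t : ℂ => 4 * M / r ^ 2 * ‖v‖ ^ 2 * ‖t‖) (𝓝[≠] 0) (𝓝 0) :=
    tendsto_nhdsWithin_of_tendsto_nhds <| by
      simpa using ((continuous_norm (E := ℂ)).const_mul (4 * M / r ^ 2 * ‖v‖ ^ 2)).tendsto 0
  filter_upwards [hlim.eventually_lt_const hε, self_mem_nhdsWithin,
    nhdsWithin_le_nhds (eventually_norm_smul_lt hr v)] with t htε ht₀ htv x hx
  have hsub := ball_subset_ball_two_mul hx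
  have hdiff : DifferentiableAt ℂ f x :=
    hf.differentiableAt (isOpen_ball.mem_nhds (hsub (mem_ball_self hr)))
  rw [dist_comm, dist_eq_norm, ← hdiff.lineDeriv_eq_fderiv]
  exact ((gateauxHolomorphicOn_of_differentiableOn (hf.mono hsub)
    isOpen_ball).norm_smul_sub_sub_lineDeriv_le (fun y hy => hM y (hsub hy)) ht₀ htv).trans_lt htε

theorem differentiableOn_fderiv_apply [CompleteSpace F] (hf : DifferentiableOn ℂ f U)
    (hU : IsOpen U) (v : E) : DifferentiableOn ℂ (fun z => fderiv ℂ f z v) U := fun z hz => by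
  obtain ⟨R, hR, M, hRU, hM⟩ := exists_ball_norm_le hf.continuousOn hU hz
  obtain ⟨r, rfl⟩ : ∃ r, R = 2 * r := ⟨R / 2, by ring⟩
  have hr : 0 < r := by linarith
  have hquot : ∀ᶠ t : ℂ in 𝓝[≠] 0,
      DifferentiableOn ℂ (fun x => t⁻¹ • (f (x + t • v) - f x)) (ball z r) := by
    filter_upwards [nhdsWithin_le_nhds (eventually_norm_smul_lt hr v)] with t htv
    have hshift : MapsTo (· + t • v) (ball z r) (ball z (2 * r)) := fun x hx =>
      ball_subset_ball_two_mul hx (by simpa using htv)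
    exact (((hf.mono hRU).fun_comp (by fun_prop) hshift).sub
      (hf.mono ((ball_subset_ball (by linarith)).trans hRU))).const_smul _
  exact ((differentiableOn_of_tendstoUniformlyOn
    (tendstoUniformlyOn_smul_sub (hf.mono hRU) hM hr v) hquot
    isOpen_ball).differentiableAt (ball_mem_nhds z hr)).differentiableWithinAt

theorem hasStrictFDerivAt_of_differentiableOn [FiniteDimensional ℂ E] [CompleteSpace F]
    (hf : DifferentiableOn ℂ f U) (hU : IsOpen U) (hz : z ∈ U) :
    HasStrictFDerivAt f (fderiv ℂ f z) z :=
  hasStrictFDerivAt_of_hasFDerivAt_of_continuousAt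
    (hU.eventually_mem hz |>.mono fun _ hx => (hf.differentiableAt (hU.mem_nhds hx)).hasFDerivAt)
    ((continuousOn_clm_apply.2 fun v =>
      (differentiableOn_fderiv_apply hf hU v).continuousOn).continuousAt (hU.mem_nhds hz))

end Osgood

/-! ### Radó's theorem -/

section Rado

theorem norm_le_of_forall_mem_frontier_ne_zero {E : Type*} [NormedAddCommGroup E] [NormedSpace ℂ E]
    [Nontrivial E] [ProperSpace E] {U : Set E} (hU : Bornology.IsBounded U) {u g : E → ℂ}
    (hu : DiffContOnCl ℂ u U) (hg : DiffContOnCl ℂ g U) {M : ℝ}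
    (hM₀ : 0 ≤ M) (hM : ∀ z ∈ frontier U, u z ≠ 0 → ‖g z‖ ≤ M) {z : E} (hz : z ∈ U)
    (huz : u z ≠ 0) : ‖g z‖ ≤ M := by
  obtain ⟨C, hC⟩ := (hU.isCompact_closure.of_isClosed_subset isClosed_frontier
    frontier_subset_closure).exists_bound_of_continuousOn (hu.2.mono frontier_subset_closure)
  have hpow : ∀ n : ℕ, ‖g z‖ ^ n * ‖u z‖ ≤ M ^ n * C := fun n => by
    rw [← norm_pow, ← norm_mul]
    refine norm_le_of_forall_mem_frontier_norm_le (f := fun x => g x ^ n * u x) hU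
      ⟨(hg.1.pow n).mul hu.1, (hg.2.pow n).mul hu.2⟩ (fun x hx => ?_) (subset_closure hz)
    have hCx := (norm_nonneg _).trans (hC x hx)
    by_cases hux : u x = 0
    · simp only [hux, mul_zero, norm_zero]
      positivity
    · rw [norm_mul, norm_pow]
      gcongr
      exacts [hM x hx hux, hC x hx]
  by_contra! hlt
  have hgz : 0 < ‖g z‖ := hM₀.trans_lt hlt
  have hlim : Tendsto (fun n : ℕ => (M / ‖g z‖) ^ n * C) atTop (𝓝 (0 * C)) :=
    (tendsto_pow_atTop_nhds_zero_of_lt_one (by positivity) ((div_lt_one hgz).2 hlt)).mul_const C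
  have hle := ge_of_tendsto' (b := ‖u z‖) hlim fun n => by
    rw [div_pow, div_mul_eq_mul_div, le_div_iff₀ (by positivity), mul_comm]
    exact hpow n
  exact huz (norm_le_zero_iff.1 (by simpa using hle))

theorem isOpen_inter_support {α M : Type*} [TopologicalSpace α] [TopologicalSpace M] [T1Space M]
    [Zero M] {U : Set α} {u : α → M} (hU : IsOpen U) (hu : ContinuousOn u U) :
    IsOpen (U ∩ support u) :=
  hu.isOpen_inter_preimage hU isOpen_ne

theorem mem_frontier_of_mem_frontier_inter_support {α M : Type*} [TopologicalSpace α]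
    [TopologicalSpace M] [T1Space M] [Zero M] {U : Set α} {u : α → M} {z : α} (hU : IsOpen U)
    (hu : ContinuousOn u U) (hz : z ∈ frontier (U ∩ support u)) (huz : u z ≠ 0) :
    z ∈ frontier U := by
  rw [(isOpen_inter_support hU hu).frontier_eq] at hz
  rw [hU.frontier_eq]
  exact ⟨closure_mono inter_subset_left hz.1, fun hzU => hz.2 ⟨hzU, huz⟩⟩

variable {u φ : ℂ → ℂ} {c : ℂ} {R : ℝ}

/-- The hypothesis of Radó's theorem on the closed disc of centre `c` and radius `R`: `g` is
continuous there, and holomorphic in the interior off the zeros of `u`. -/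
structure HolomorphicOffZeros (u g : ℂ → ℂ) (c : ℂ) (R : ℝ) : Prop where
  continuousOn : ContinuousOn g (closedBall c R)
  differentiableOn : DifferentiableOn ℂ g (ball c R ∩ support u)

namespace HolomorphicOffZeros

theorem diffContOnCl (hφ : HolomorphicOffZeros u φ c R) :
    DiffContOnCl ℂ φ (ball c R ∩ support u) :=
  ⟨hφ.differentiableOn,
    hφ.continuousOn.mono ((closure_mono inter_subset_left).trans closure_ball_subset_closedBall)⟩

theorem mem_sphere_of_mem_frontier (hu : HolomorphicOffZeros u u c R) {z : ℂ}
    (hz : z ∈ frontier (ball c R ∩ support u)) (huz : u z ≠ 0) : z ∈ sphere c R :=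
  frontier_ball_subset_sphere <| mem_frontier_of_mem_frontier_inter_support isOpen_ball
    (hu.continuousOn.mono ball_subset_closedBall) hz huz

theorem of_differentiable {P : ℂ → ℂ} (hP : Differentiable ℂ P) : HolomorphicOffZeros u P c R :=
  ⟨hP.continuous.continuousOn, hP.differentiableOn⟩

theorem comp {h : ℂ → ℂ} (hh : Differentiable ℂ h) (hφ : HolomorphicOffZeros u φ c R) :
    HolomorphicOffZeros u (h ∘ φ) c R :=
  ⟨hh.continuous.comp_continuousOn hφ.continuousOn, hh.comp_differentiableOn hφ.differentiableOn⟩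

theorem sub {ψ : ℂ → ℂ} (hφ : HolomorphicOffZeros u φ c R) (hψ : HolomorphicOffZeros u ψ c R) :
    HolomorphicOffZeros u (φ - ψ) c R :=
  ⟨hφ.continuousOn.sub hψ.continuousOn, hφ.differentiableOn.sub hψ.differentiableOn⟩

theorem mul {ψ : ℂ → ℂ} (hφ : HolomorphicOffZeros u φ c R) (hψ : HolomorphicOffZeros u ψ c R) :
    HolomorphicOffZeros u (φ * ψ) c R :=
  ⟨hφ.continuousOn.mul hψ.continuousOn, hφ.differentiableOn.mul hψ.differentiableOn⟩

theorem ball_subset_closure (hu : HolomorphicOffZeros u u c R) (huc : u c ≠ 0) :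
    ball c (R / 2) ⊆ closure (ball c R ∩ support u) := by
  intro β hβ
  by_contra hβW
  have hR : 0 < R := by linarith [pos_of_mem_ball hβ]
  have hβR : dist β c < R / 2 := hβ
  have hne : ∀ z ∈ closure (ball c R ∩ support u), z - β ≠ 0 := fun z hz hzβ =>
    hβW (sub_eq_zero.1 hzβ ▸ hz)
  have hinv : DiffContOnCl ℂ (fun z => (z - β)⁻¹) (ball c R ∩ support u) :=
    DiffContOnCl.inv (f := fun z => z - β) (by fun_prop : Differentiable ℂ _).diffContOnCl hne
  have hbound : ∀ z ∈ sphere c R, ‖(z - β)⁻¹‖ ≤ (R / 2)⁻¹ := fun z hz => by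
    rw [norm_inv, ← dist_eq]
    have := dist_triangle z β c
    rw [mem_sphere] at hz
    exact inv_anti₀ (by linarith) (by linarith)
  have hcentre : ‖(c - β)⁻¹‖ ≤ (R / 2)⁻¹ :=
    norm_le_of_forall_mem_frontier_ne_zero (isBounded_ball.subset inter_subset_left)
      hu.diffContOnCl hinv (by positivity)
      (fun z hz huz => hbound z (hu.mem_sphere_of_mem_frontier hz huz)) ⟨mem_ball_self hR, huc⟩ huc
  have hcβ : 0 < dist c β := dist_pos.2 fun hcβ =>
    hβW (hcβ ▸ subset_closure ⟨mem_ball_self hR, huc⟩)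
  rw [norm_inv, ← dist_eq, inv_le_inv₀ hcβ (by positivity), dist_comm] at hcentre
  exact hcentre.not_gt hβR

theorem norm_le (hu : HolomorphicOffZeros u u c R) (hφ : HolomorphicOffZeros u φ c R) {M : ℝ}
    (hM₀ : 0 ≤ M) (hM : ∀ z ∈ sphere c R, ‖φ z‖ ≤ M) {z : ℂ} (hz : z ∈ ball c R)
    (huz : u z ≠ 0) : ‖φ z‖ ≤ M :=
  norm_le_of_forall_mem_frontier_ne_zero (isBounded_ball.subset inter_subset_left)
    hu.diffContOnCl hφ.diffContOnCl hM₀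
    (fun z hz huz => hM z (hu.mem_sphere_of_mem_frontier hz huz)) ⟨hz, huz⟩ huz

theorem re_le (hu : HolomorphicOffZeros u u c R) (hφ : HolomorphicOffZeros u φ c R) {M : ℝ}
    (hM : ∀ z ∈ sphere c R, (φ z).re ≤ M) {z : ℂ} (hz : z ∈ ball c R) (huz : u z ≠ 0) :
    (φ z).re ≤ M := by
  have hexp := hu.norm_le (hφ.comp differentiable_exp) (Real.exp_pos M).le
    (fun w hw => by simpa [norm_exp] using hM w hw) hz huz
  simpa [norm_exp] using hexp

theorem abs_re_le (hu : HolomorphicOffZeros u u c R) (hφ : HolomorphicOffZeros u φ c R) {M : ℝ}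
    (hM : ∀ z ∈ sphere c R, |(φ z).re| ≤ M) {z : ℂ} (hz : z ∈ ball c R) (huz : u z ≠ 0) :
    |(φ z).re| ≤ M := by
  refine abs_le'.2 ⟨hu.re_le hφ (fun w hw => (abs_le'.1 (hM w hw)).1) hz huz, ?_⟩
  simpa using hu.re_le (hφ.comp differentiable_neg)
    (fun w hw => by simpa using (abs_le'.1 (hM w hw)).2) hz huz

end HolomorphicOffZeros

theorem exists_differentiable_re_eq_of_mem_span_fourier {T : ℝ} (c : ℂ) (hR : R ≠ 0)
    {p : C(AddCircle T, ℂ)} (hp : p ∈ Submodule.span ℂ (range (fourier (T := T)))) (a : ℂ) :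
    ∃ P : ℂ → ℂ, Differentiable ℂ P ∧
      ∀ θ : AddCircle T, (P (c + R * θ.toCircle)).re = (a * p θ).re := by
  have hR' : (R : ℂ) ≠ 0 := ofReal_ne_zero.2 hR
  induction hp using Submodule.span_induction generalizing a with
  | mem p hp =>
    obtain ⟨n, rfl⟩ := hp
    obtain ⟨k, rfl | rfl⟩ := n.eq_nat_or_neg
    · refine ⟨fun z => a * ((z - c) / R) ^ k, by fun_prop, fun θ => ?_⟩
      simp [fourier_apply, AddCircle.toCircle_nsmul, hR']
    · -- a negative frequency has the same real part as the conjugate positive frequency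
      refine ⟨fun z => starRingEnd ℂ a * ((z - c) / R) ^ k, by fun_prop, fun θ => ?_⟩
      rw [← conj_re (a * _), map_mul, fourier_neg, conj_conj]
      simp [fourier_apply, AddCircle.toCircle_nsmul, hR']
  | zero => exact ⟨0, differentiable_const 0, by simp⟩
  | add p q _ _ hp hq =>
    obtain ⟨P, hP, hPp⟩ := hp a
    obtain ⟨Q, hQ, hQq⟩ := hq a
    exact ⟨P + Q, hP.add hQ, fun θ => by simp [mul_add, add_re, hPp, hQq]⟩
  | smul b p _ hp =>
    obtain ⟨P, hP, hPp⟩ := hp (a * b)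
    exact ⟨P, hP, fun θ => by rw [hPp, mul_assoc, ContinuousMap.smul_apply, smul_eq_mul]⟩

theorem exists_differentiable_abs_re_sub_le (hR : 0 < R) (hφ : ContinuousOn φ (sphere c R)) {ε : ℝ}
    (hε : 0 < ε) :
    ∃ P : ℂ → ℂ, Differentiable ℂ P ∧ ∀ z ∈ sphere c R, |(φ z - P z).re| ≤ ε := by
  have : Fact (0 < 2 * Real.pi) := ⟨Real.two_pi_pos⟩
  have hγ : ∀ θ : AddCircle (2 * Real.pi), c + R * θ.toCircle ∈ sphere c R := fun θ => by
    simp [abs_of_pos hR, Circle.norm_coe]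
  let q : C(AddCircle (2 * Real.pi), ℂ) :=
    ⟨fun θ => φ (c + R * θ.toCircle), hφ.comp_continuous (by fun_prop) hγ⟩
  have hq : q ∈ (Submodule.span ℂ (range (fourier (T := 2 * Real.pi)))).topologicalClosure := by
    rw [span_fourier_closure_eq_top]
    trivial
  obtain ⟨p, hp, hqp⟩ := Metric.mem_closure_iff.1 hq ε hε
  obtain ⟨P, hP, hPp⟩ := exists_differentiable_re_eq_of_mem_span_fourier c hR.ne' hp 1
  refine ⟨P, hP, fun z hz => ?_⟩
  obtain ⟨θ, rfl⟩ : ∃ θ : AddCircle (2 * Real.pi), c + R * θ.toCircle = z := by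
    obtain ⟨t, rfl⟩ : z ∈ range (circleMap c R) := by rwa [range_circleMap, abs_of_pos hR]
    exact ⟨t, by simp [circleMap, AddCircle.toCircle_apply_mk]⟩
  rw [sub_re, hPp, one_mul, ← sub_re]
  exact (abs_re_le_norm _).trans ((ContinuousMap.norm_coe_le_norm (q - p) θ).trans
    (dist_eq_norm q p ▸ hqp.le))

namespace HolomorphicOffZeros

theorem abs_re_sub_circleAverage_le (hu : HolomorphicOffZeros u u c R) (huc : u c ≠ 0) (hR : 0 < R)
    (hφ : HolomorphicOffZeros u φ c R) {ε : ℝ} (hε : 0 < ε) :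
    |(φ c - Real.circleAverage φ c R).re| ≤ ε + ε := by
  have hint : ∀ {g : ℂ → ℂ}, ContinuousOn g (sphere c R) → CircleIntegrable g c R :=
    ContinuousOn.circleIntegrable hR.le
  have hφc := hφ.continuousOn.mono sphere_subset_closedBall
  obtain ⟨P, hP, hle⟩ := exists_differentiable_abs_re_sub_le hR hφc hε
  have hPc : ContinuousOn P (sphere c R) := hP.continuous.continuousOn
  have hcentre : |((φ - P) c).re| ≤ ε :=
    hu.abs_re_le (hφ.sub (of_differentiable hP)) hle (mem_ball_self hR) huc
  have haverage : |(Real.circleAverage (φ - P) c R).re| ≤ ε := by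
    have hre := reCLM.circleAverage_comp_comm (hint (hφc.sub hPc))
    rw [reCLM_apply] at hre
    rw [← hre]
    refine Real.abs_circleAverage_le_circleAverage_abs.trans
      (Real.circleAverage_mono_on_of_le_circle ?_ (by rwa [abs_of_pos hR]))
    exact ((continuous_re.comp_continuousOn (hφc.sub hPc)).abs).circleIntegrable hR.le
  have hmean : Real.circleAverage P c R = P c := hP.diffContOnCl.circleAverage
  have hsplit : φ c - Real.circleAverage φ c R =
      (φ - P) c - Real.circleAverage (φ - P) c R := by
    rw [Real.circleAverage_sub (hint hφc) (hint hPc), hmean, Pi.sub_apply]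
    ring
  rw [hsplit, sub_re]
  exact (abs_sub _ _).trans (add_le_add hcentre haverage)

theorem circleAverage_eq (hu : HolomorphicOffZeros u u c R) (huc : u c ≠ 0) (hR : 0 < R)
    (hφ : HolomorphicOffZeros u φ c R) : Real.circleAverage φ c R = φ c := by
  have hre : ∀ {ψ}, HolomorphicOffZeros u ψ c R → (ψ c - Real.circleAverage ψ c R).re = 0 :=
    fun hψ => abs_eq_zero.1 <| le_antisymm (le_of_forall_pos_le_add fun ε hε => by
      simpa using hu.abs_re_sub_circleAverage_le huc hR hψ (half_pos hε)) (abs_nonneg _)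
  have hI := hre (hφ.comp (by fun_prop : Differentiable ℂ (I • · : ℂ → ℂ)))
  have hsmul : Real.circleAverage ((I • ·) ∘ φ) c R = I • Real.circleAverage φ c R :=
    Real.circleAverage_fun_smul
  rw [hsmul, comp_apply, ← smul_sub, smul_eq_mul, I_mul_re, neg_eq_zero] at hI
  exact (sub_eq_zero.1 (Complex.ext (hre hφ) hI)).symm

theorem circleIntegral_eq_zero (hu : HolomorphicOffZeros u u c R) (huc : u c ≠ 0) (hR : 0 < R)
    (hφ : HolomorphicOffZeros u φ c R) : ∮ z in C(c, R), φ z = 0 := by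
  have hmean := hu.circleAverage_eq huc hR
    ((of_differentiable (P := (· - c)) (by fun_prop)).mul hφ)
  rw [Real.circleAverage_eq_circleIntegral hR.ne', Pi.mul_apply, sub_self, zero_mul,
    smul_eq_zero_iff_right (inv_ne_zero two_pi_I_ne_zero)] at hmean
  rw [← hmean]
  refine circleIntegral.integral_congr hR.le fun z hz => ?_
  have hzc : z - c ≠ 0 := sub_ne_zero.2 (ne_of_mem_sphere hz hR.ne')
  simp [hzc]

theorem dslope {α : ℂ} (hu : HolomorphicOffZeros u u c R)
    (hφ : HolomorphicOffZeros u φ c R) (hα : α ∈ ball c R) (huα : u α ≠ 0) :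
    HolomorphicOffZeros u (dslope φ α) c R := by
  have hW : ball c R ∩ support u ∈ 𝓝 α := (isOpen_inter_support isOpen_ball
    (hu.continuousOn.mono ball_subset_closedBall)).mem_nhds ⟨hα, huα⟩
  exact ⟨(continuousOn_dslope (closedBall_mem_nhds_of_mem hα)).2
    ⟨hφ.continuousOn, hφ.differentiableOn.differentiableAt hW⟩,
    (differentiableOn_dslope hW).2 hφ.differentiableOn⟩

theorem cauchy_formula {α : ℂ} (hu : HolomorphicOffZeros u u c R) (huc : u c ≠ 0)
    (hφ : HolomorphicOffZeros u φ c R) (hα : α ∈ ball c R) (huα : u α ≠ 0) :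
    (2 * Real.pi * I : ℂ)⁻¹ • ∮ z in C(c, R), (z - α)⁻¹ • φ z = φ α := by
  have hR : 0 < R := pos_of_mem_ball hα
  have hslope := hu.circleIntegral_eq_zero huc hR (hu.dslope hφ hα huα)
  have hne : ∀ z ∈ sphere c R, z ≠ α := fun z hz hzα => (mem_ball.1 hα).ne (hzα ▸ hz)
  have hinv : ContinuousOn (fun z => (z - α)⁻¹) (sphere c R) :=
    ContinuousOn.inv₀ (by fun_prop) fun z hz => sub_ne_zero.2 (hne z hz)
  have hint : CircleIntegrable (fun z => (z - α)⁻¹ • φ z) c R :=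
    (hinv.smul (hφ.continuousOn.mono sphere_subset_closedBall)).circleIntegrable hR.le
  have hconst : CircleIntegrable (fun z => (z - α)⁻¹ • φ α) c R :=
    (hinv.smul continuousOn_const).circleIntegrable hR.le
  have hexpand : ∮ z in C(c, R), _root_.dslope φ α z =
      (∮ z in C(c, R), (z - α)⁻¹ • φ z) - ∮ z in C(c, R), (z - α)⁻¹ • φ α := by
    rw [← circleIntegral.integral_sub hint hconst]
    refine circleIntegral.integral_congr hR.le fun z hz => ?_
    simp only [dslope_of_ne φ (hne z hz), slope_def_module, smul_sub]
  rw [hexpand, circleIntegral.integral_smul_const, circleIntegral.integral_sub_inv_of_mem_ball hα,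
    sub_eq_zero] at hslope
  rw [hslope, inv_smul_smul₀ two_pi_I_ne_zero]

theorem differentiableOn_ball (hu : HolomorphicOffZeros u u c R) (huc : u c ≠ 0)
    (hφ : HolomorphicOffZeros u φ c R) : DifferentiableOn ℂ φ (ball c (R / 2)) := by
  rcases le_or_gt R 0 with hR | hR
  · rw [ball_eq_empty.2 (by linarith : R / 2 ≤ 0)]
    exact differentiableOn_empty
  let Γ : ℂ → ℂ := fun α => (2 * Real.pi * I : ℂ)⁻¹ • ∮ z in C(c, R), (z - α)⁻¹ • φ z
  have hΓ : DifferentiableOn ℂ Γ (ball c R) := by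
    lift R to NNReal using hR.le
    have h := (hasFPowerSeriesOn_cauchy_integral ((hφ.continuousOn.mono
      sphere_subset_closedBall).circleIntegrable hR.le) hR).differentiableOn
    rwa [Metric.eball_coe] at h
  have hsub : ball c (R / 2) ⊆ ball c R := ball_subset_ball (by linarith)
  refine (hΓ.mono hsub).congr fun β hβ => ?_
  have hcauchy : EqOn φ Γ (ball c R ∩ support u) := fun α hα =>
    (hu.cauchy_formula huc hφ hα.1 hα.2).symm
  have hclosure : EqOn φ Γ (ball c R ∩ closure (ball c R ∩ support u)) :=
    hcauchy.of_subset_closure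
      (hφ.continuousOn.mono (inter_subset_left.trans ball_subset_closedBall))
      (hΓ.continuousOn.mono inter_subset_left) (subset_inter inter_subset_left subset_closure)
      inter_subset_right
  exact hclosure ⟨hsub hβ, hu.ball_subset_closure huc hβ⟩

end HolomorphicOffZeros

theorem differentiableOn_of_differentiableOn_inter_support {V : Set ℂ} (hV : IsOpen V)
    (hVc : IsPreconnected V) (huc : ContinuousOn u V) (hφc : ContinuousOn φ V)
    (hu : DifferentiableOn ℂ u (V ∩ support u)) (hφ : DifferentiableOn ℂ φ (V ∩ support u))
    (hne : (V ∩ support u).Nonempty) : DifferentiableOn ℂ φ V := by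
  have hlocal : ∀ p ∈ V ∩ closure (V ∩ support u),
      ∃ c ∈ V ∩ support u, ∃ r, p ∈ ball c (r / 2) ∧ closedBall c r ⊆ V := by
    rintro p ⟨hpV, hp⟩
    obtain ⟨r, hr, hrV⟩ := nhds_basis_closedBall.mem_iff.1 (hV.mem_nhds hpV)
    obtain ⟨c, hc, hpc⟩ := Metric.mem_closure_iff.1 hp (r / 4) (by linarith)
    refine ⟨c, hc, r / 2, by rw [mem_ball]; linarith, (closedBall_subset_closedBall' ?_).trans hrV⟩
    rw [dist_comm]
    linarith
  have hoff : ∀ {c r g}, closedBall c r ⊆ V → ContinuousOn g V →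
      DifferentiableOn ℂ g (V ∩ support u) → HolomorphicOffZeros u g c r := fun hcV hgc hg =>
    ⟨hgc.mono hcV, hg.mono (inter_subset_inter_left _ (ball_subset_closedBall.trans hcV))⟩
  have hW : V ∩ support u ⊆ interior (closure (V ∩ support u)) :=
    interior_maximal subset_closure (isOpen_inter_support hV huc)
  have hdense : V ⊆ interior (closure (V ∩ support u)) := by
    refine hVc.subset_of_closure_inter_subset isOpen_interior
      (hne.mono fun z hz => ⟨hz.1, hW hz⟩) ?_
    rintro p ⟨hp, hpV⟩
    obtain ⟨c, hc, r, hpc, hcV⟩ := hlocal p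
      ⟨hpV, closure_minimal interior_subset isClosed_closure hp⟩
    refine interior_maximal (((hoff hcV huc hu).ball_subset_closure hc.2).trans (closure_mono ?_))
      isOpen_ball hpc
    exact inter_subset_inter_left _ (ball_subset_closedBall.trans hcV)
  intro p hp
  obtain ⟨c, hc, r, hpc, hcV⟩ := hlocal p ⟨hp, interior_subset (hdense hp)⟩
  exact ((hoff hcV huc hu).differentiableOn_ball hc.2 (hoff hcV hφc hφ)).differentiableAt
    (isOpen_ball.mem_nhds hpc) |>.differentiableWithinAt

end Rado

/-! ### Jacobians and the exchange of coordinates -/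

section Jacobian

variable {V : Type*} [NormedAddCommGroup V] [NormedSpace ℂ V] {X : Set V} {x : V}
  {G : V → V} {h : V → ℂ}

/-- The complex Jacobian determinant of `G` at `x`. -/
noncomputable def jacobian (G : V → V) (x : V) : ℂ :=
  (fderiv ℂ G x).det

/-- The map obtained from `G` by replacing its coordinate of index `j` in the basis `b` by `h`. -/
noncomputable def replaceCoord {ι : Type*} (b : Module.Basis ι ℂ V) (j : ι) (G : V → V) (h : V → ℂ)
    (z : V) : V :=
  G z + (h z - b.coord j (G z)) • b j

section Basis

variable {ι : Type*} (b : Module.Basis ι ℂ V) (j : ι)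

theorem coord_replaceCoord_self (z : V) : b.coord j (replaceCoord b j G h z) = h z := by
  simp [replaceCoord]

theorem coord_replaceCoord_of_ne {i j : ι} (hij : i ≠ j) (z : V) :
    b.coord i (replaceCoord b j G h z) = b.coord i (G z) := by
  simp [replaceCoord, hij.symm]

end Basis

variable [FiniteDimensional ℂ V] {ι : Type*} (b : Module.Basis ι ℂ V) {j : ι}

theorem differentiable_coord (i : ι) : Differentiable ℂ (b.coord i) :=
  (b.coord i).toContinuousLinearMap.differentiable

theorem differentiableOn_of_coord {E : Type*} [NormedAddCommGroup E] [NormedSpace ℂ E] {f : E → V}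
    {U : Set E} (hf : ∀ i, DifferentiableOn ℂ (b.coord i ∘ f) U) : DifferentiableOn ℂ f U := by
  have := FiniteDimensional.fintypeBasisIndex b
  have hsum : (fun z => ∑ i, b.coord i (f z) • b i) = f := funext fun z => b.sum_repr (f z)
  rw [← hsum]
  exact DifferentiableOn.fun_sum fun i _ => (hf i).smul_const (b i)

theorem differentiableOn_replaceCoord (hG : DifferentiableOn ℂ G X) (hh : DifferentiableOn ℂ h X) :
    DifferentiableOn ℂ (replaceCoord b j G h) X :=
  hG.add ((hh.sub ((differentiable_coord b j).comp_differentiableOn hG)).smul_const (b j))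

theorem differentiableOn_jacobian (hG : DifferentiableOn ℂ G X) (hX : IsOpen X) :
    DifferentiableOn ℂ (jacobian G) X := by
  classical
  have := FiniteDimensional.complete ℂ V
  let b := Module.finBasis ℂ V
  have hleibniz : ∀ z, jacobian G z =
      ∑ σ : Equiv.Perm (Fin _), Equiv.Perm.sign σ • ∏ i, b.coord (σ i) (fderiv ℂ G z (b i)) :=
    fun z => by
      rw [jacobian, ContinuousLinearMap.det, ← LinearMap.det_toMatrix b, Matrix.det_apply]
      simp only [LinearMap.toMatrix_apply, Module.Basis.coord_apply, ContinuousLinearMap.coe_coe]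
  have hentry : ∀ i k, DifferentiableOn ℂ (fun z => b.coord k (fderiv ℂ G z (b i))) X := fun i k =>
    (differentiable_coord b k).comp_differentiableOn (differentiableOn_fderiv_apply hG hX (b i))
  rw [funext hleibniz]
  refine DifferentiableOn.fun_sum fun σ _ => DifferentiableOn.const_smul (fun z hz => ?_) _
  exact (HasFDerivWithinAt.finsetProd (u := Finset.univ) fun i _ =>
    (hentry i (σ i) z hz).hasFDerivWithinAt).differentiableWithinAt

theorem exists_equiv_hasStrictFDerivAt_of_jacobian_ne_zero (hG : DifferentiableOn ℂ G X)
    (hX : IsOpen X) (hx : x ∈ X) (hJ : jacobian G x ≠ 0) :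
    ∃ A : V ≃L[ℂ] V, HasStrictFDerivAt G (A : V →L[ℂ] V) x := by
  have := FiniteDimensional.complete ℂ V
  exact ⟨(fderiv ℂ G x).toContinuousLinearEquivOfDetNeZero hJ,
    hasStrictFDerivAt_of_differentiableOn hG hX hx⟩

theorem fderiv_replaceCoord (hG : DifferentiableAt ℂ G x) (hh : DifferentiableAt ℂ h x) (v : V) :
    fderiv ℂ (replaceCoord b j G h) x v =
      fderiv ℂ G x v + (fderiv ℂ h x v - b.coord j (fderiv ℂ G x v)) • b j := by
  have hcoord : HasFDerivAt (fun z => b.coord j (G z))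
      ((b.coord j).toContinuousLinearMap ∘L fderiv ℂ G x) x :=
    (b.coord j).toContinuousLinearMap.hasFDerivAt.comp x hG.hasFDerivAt
  have hderiv := hG.hasFDerivAt.add ((hh.hasFDerivAt.sub hcoord).smul_const (b j))
  rw [show fderiv ℂ (replaceCoord b j G h) x = _ from hderiv.fderiv]
  simp

theorem jacobian_replaceCoord (hG : DifferentiableAt ℂ G x) (hh : DifferentiableAt ℂ h x)
    (hJ : jacobian G x ≠ 0) {v : V} (hv : fderiv ℂ G x v = b j) :
    jacobian (replaceCoord b j G h) x = fderiv ℂ h x v * jacobian G x := by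
  let A := (fderiv ℂ G x).toContinuousLinearEquivOfDetNeZero hJ
  let ψ : V →ₗ[ℂ] ℂ := (fderiv ℂ h x : V →ₗ[ℂ] ℂ) ∘ₗ A.symm - b.coord j
  have hA : ∀ w, A.symm (fderiv ℂ G x w) = w := A.symm_apply_apply
  have hcomp : (fderiv ℂ (replaceCoord b j G h) x : V →ₗ[ℂ] V) =
      LinearMap.transvection ψ (b j) ∘ₗ (fderiv ℂ G x : V →ₗ[ℂ] V) := by
    ext w
    simp [ψ, LinearMap.transvection.apply, fderiv_replaceCoord b hG hh, hA]
  rw [jacobian, ContinuousLinearMap.det, hcomp, LinearMap.det_comp, LinearMap.transvection.det]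
  have hinv : A.symm (b j) = v := hv ▸ hA v
  have hψ : 1 + ψ (b j) = fderiv ℂ h x v := by simp [ψ, hinv]
  rw [hψ]
  rfl

end Jacobian

section InverseFunction

variable {V : Type*} [NormedAddCommGroup V] [NormedSpace ℂ V] [FiniteDimensional ℂ V] {X : Set V}
  {x : V} {G : V → V}

theorem differentiableAt_of_comp_of_jacobian_ne_zero {E : Type*} [NormedAddCommGroup E]
    [NormedSpace ℂ E] {γ : E → V} {z : E} (hG : DifferentiableOn ℂ G X) (hX : IsOpen X)
    (hz : γ z ∈ X) (hJ : jacobian G (γ z) ≠ 0) (hγ : ContinuousAt γ z)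
    (hcomp : DifferentiableAt ℂ (G ∘ γ) z) : DifferentiableAt ℂ γ z := by
  have := FiniteDimensional.complete ℂ V
  obtain ⟨A, hA⟩ := exists_equiv_hasStrictFDerivAt_of_jacobian_ne_zero hG hX hz hJ
  have hinv : hA.localInverse G A (γ z) ∘ (G ∘ γ) =ᶠ[𝓝 z] γ :=
    hγ.eventually hA.eventually_left_inverse
  exact (hA.to_localInverse.hasFDerivAt.differentiableAt.comp z hcomp).congr_of_eventuallyEq
    hinv.symm

theorem exists_curve_comp_eq_line (hG : DifferentiableOn ℂ G X) (hX : IsOpen X) (hx : x ∈ X)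
    (hJ : jacobian G x ≠ 0) (w : V) :
    ∃ r > 0, ∃ γ : ℂ → V, γ 0 = x ∧ ∀ t ∈ ball 0 r, γ t ∈ X ∧ jacobian G (γ t) ≠ 0 ∧
      DifferentiableAt ℂ γ t ∧ G (γ t) = G x + t • w := by
  have := FiniteDimensional.complete ℂ V
  obtain ⟨A, hA⟩ := exists_equiv_hasStrictFDerivAt_of_jacobian_ne_zero hG hX hx hJ
  let e := hA.toOpenPartialHomeomorph G
  let ℓ : ℂ → V := fun t => G x + t • w
  have hℓ : Differentiable ℂ ℓ := by fun_prop
  have hS : IsOpen (X ∩ support (jacobian G)) :=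
    isOpen_inter_support hX (differentiableOn_jacobian hG hX).continuousOn
  have hW : IsOpen (ℓ ⁻¹' (e.target ∩ e.symm ⁻¹' (X ∩ support (jacobian G)))) :=
    (e.symm.isOpen_inter_preimage hS).preimage hℓ.continuous
  have hstart : e.symm (ℓ 0) = x := by
    rw [show ℓ 0 = e x by simp [ℓ, e]]
    exact e.left_inv hA.mem_toOpenPartialHomeomorph_source
  have hstart_mem : (0 : ℂ) ∈ ℓ ⁻¹' (e.target ∩ e.symm ⁻¹' (X ∩ support (jacobian G))) :=
    ⟨by simpa [ℓ] using hA.image_mem_toOpenPartialHomeomorph_target, by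
      rw [mem_preimage, hstart]
      exact ⟨hx, hJ⟩⟩
  obtain ⟨r, hr, hball⟩ := Metric.isOpen_iff.1 hW 0 hstart_mem
  have hlift : ∀ t ∈ ball 0 r, G (e.symm (ℓ t)) = ℓ t := fun t ht => e.right_inv (hball ht).1
  refine ⟨r, hr, e.symm ∘ ℓ, hstart, fun t ht => ⟨(hball ht).2.1, (hball ht).2.2, ?_, hlift t ht⟩⟩
  refine differentiableAt_of_comp_of_jacobian_ne_zero hG hX (hball ht).2.1 (hball ht).2.2
    ((e.symm.continuousAt (hball ht).1).comp hℓ.continuous.continuousAt) ?_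
  exact (hℓ t).congr_of_eventuallyEq (eventually_of_mem (isOpen_ball.mem_nhds ht) hlift)

end InverseFunction

section Exchange

theorem eventuallyEq_const_of_deriv_mul_mem {A : Set (ℂ → ℂ)} {c : ℂ → ℂ} {z : ℂ}
    (hA : ∀ a ∈ A, AnalyticAt ℂ a z) (hc : AnalyticAt ℂ c z) (hcz : c z ≠ 0)
    (hstep : ∀ a ∈ A, ∃ a' ∈ A, a' z = 0 ∧ deriv a * c =ᶠ[𝓝 z] a') {a : ℂ → ℂ} (ha : a ∈ A) :
    a =ᶠ[𝓝 z] fun _ => a z := by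
  have horder : ∀ n : ℕ, ∀ a ∈ A, (n : ℕ∞) ≤ analyticOrderAt (a · - a z) z := fun n => by
    induction n with
    | zero => simp
    | succ n ih =>
      intro a ha
      obtain ⟨a', ha', ha'z, heq⟩ := hstep a ha
      have hn := ih a' ha'
      simp only [ha'z, sub_zero] at hn
      rw [← analyticOrderAt_congr heq, analyticOrderAt_mul (hA a ha).deriv hc,
        hc.analyticOrderAt_eq_zero.2 hcz, add_zero] at hn
      rw [← (hA a ha).analyticOrderAt_deriv_add_one, Nat.cast_add_one]
      gcongr
  have htop : analyticOrderAt (a · - a z) z = ⊤ :=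
    ENat.eq_top_iff_forall_ge.2 fun n => horder n a ha
  exact (analyticOrderAt_eq_top.1 htop).mono fun _ => sub_eq_zero.1

variable {V : Type*} [NormedAddCommGroup V] [NormedSpace ℂ V] [FiniteDimensional ℂ V] {X : Set V}
  {x : V} {G : V → V} {ι : Type*} (b : Module.Basis ι ℂ V) {j : ι}

theorem deriv_comp_mul_jacobian {h : V → ℂ} {γ : ℂ → V} {t : ℂ} {w : V}
    (hG : DifferentiableAt ℂ G (γ t)) (hh : DifferentiableAt ℂ h (γ t))
    (hJ : jacobian G (γ t) ≠ 0) (hγ : DifferentiableAt ℂ γ t)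
    (hline : ∀ᶠ s in 𝓝 t, G (γ s) = w + s • b j) :
    deriv (h ∘ γ) t * jacobian G (γ t) = jacobian (replaceCoord b j G h) (γ t) := by
  have hℓ : HasDerivAt (fun s : ℂ => w + s • b j) (b j) t := by
    simpa using ((hasDerivAt_id t).smul_const (b j)).const_add w
  have hvel : fderiv ℂ G (γ t) (deriv γ t) = b j :=
    (hG.hasFDerivAt.comp_hasDerivAt t hγ.hasDerivAt).unique (hℓ.congr_of_eventuallyEq hline)
  rw [jacobian_replaceCoord b hG hh hJ hvel, fderiv_comp_deriv t hh hγ]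

theorem exists_ne_forall_eq_of_jacobian_replaceCoord_mem {B : Set (V → ℂ)} (hX : IsOpen X)
    (hB : ∀ h ∈ B, DifferentiableOn ℂ h X) (hG : DifferentiableOn ℂ G X) (hx : x ∈ X)
    (hJ : jacobian G x ≠ 0)
    (hstep : ∀ h ∈ B, jacobian (replaceCoord b j G h) ∈ B ∧
      jacobian (replaceCoord b j G h) x = 0) :
    ∃ y ∈ X, y ≠ x ∧ ∀ h ∈ B, h y = h x := by
  obtain ⟨r, hr, γ, rfl, hγ⟩ := exists_curve_comp_eq_line hG hX hx hJ (b j)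
  choose hγX hγJ hγd hline using hγ
  have h0 : (0 : ℂ) ∈ ball 0 r := mem_ball_self hr
  have hanalytic : ∀ {h : V → ℂ}, DifferentiableOn ℂ h X →
      AnalyticOnNhd ℂ (h ∘ γ) (ball 0 r) := fun hh =>
    (hh.comp (fun t ht => (hγd t ht).differentiableWithinAt) hγX).analyticOnNhd isOpen_ball
  have hderiv : ∀ h ∈ B, deriv (h ∘ γ) * (jacobian G ∘ γ) =ᶠ[𝓝 0]
      jacobian (replaceCoord b j G h) ∘ γ := fun h hh => by
    filter_upwards [isOpen_ball.mem_nhds h0] with t ht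
    exact deriv_comp_mul_jacobian b (hG.differentiableAt (hX.mem_nhds (hγX t ht)))
      ((hB h hh).differentiableAt (hX.mem_nhds (hγX t ht))) (hγJ t ht) (hγd t ht)
      (eventually_of_mem (isOpen_ball.mem_nhds ht) hline)
  have hgerm : ∀ h ∈ B, h ∘ γ =ᶠ[𝓝 0] fun _ => h (γ 0) := fun h hh => by
    refine eventuallyEq_const_of_deriv_mul_mem (A := (fun h : V → ℂ => h ∘ γ) '' B) ?_
      (hanalytic (differentiableOn_jacobian hG hX) 0 h0) hJ ?_ (mem_image_of_mem _ hh)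
    · exact forall_mem_image.2 fun h hh => hanalytic (hB h hh) 0 h0
    · exact forall_mem_image.2 fun h hh =>
        ⟨_, mem_image_of_mem _ (hstep h hh).1, (hstep h hh).2, hderiv h hh⟩
  have hr2 : ((r / 2 : ℝ) : ℂ) ∈ ball 0 r := by
    rw [mem_ball_zero_iff, norm_real, Real.norm_of_nonneg (by positivity)]
    linarith
  refine ⟨γ (r / 2 : ℝ), hγX _ hr2, fun heq => ?_, fun h hh => ?_⟩
  · have hshift := hline _ hr2
    rw [heq, left_eq_add, smul_eq_zero_iff_left (b.ne_zero j), ofReal_eq_zero] at hshift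
    linarith
  · exact (hanalytic (hB h hh)).eqOn_of_preconnected_of_eventuallyEq analyticOnNhd_const
      (convex_ball (0 : ℂ) r).isPreconnected h0 (hgerm h hh) hr2

end Exchange

section PullbackHolomorphic

variable {V E : Type*} [NormedAddCommGroup V] [NormedSpace ℂ V] [NormedAddCommGroup E]
  [NormedSpace ℂ E] {X : Set V} {F : Set (V → ℂ)}

/-- The holomorphic functions on `X` whose pullback along `Φ` is holomorphic on `D`. -/
def pullbackHolomorphic (X : Set V) (Φ : E → V) (D : Set E) : Set (V → ℂ) :=
  {h | DifferentiableOn ℂ h X ∧ DifferentiableOn ℂ (h ∘ Φ) D}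

/-- `G` is holomorphic on `X`, nonsingular at some point of `Φ '' D`, and its coordinates of index
in `s` are pulled back by `Φ` to holomorphic functions. Enlarging `s` to all indices shows that `Φ`
is holomorphic near some point of `D`. -/
structure IsPartialChart {ι : Type*} (b : Module.Basis ι ℂ V) (X : Set V) (Φ : E → V) (D : Set E)
    (s : Set ι) (G : V → V) : Prop where
  differentiableOn : DifferentiableOn ℂ G X
  coord_comp_mem : ∀ i ∈ s, b.coord i ∘ G ∈ pullbackHolomorphic X Φ D
  exists_jacobian_ne_zero : ∃ y ∈ D, jacobian G (Φ y) ≠ 0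

variable {ι : Type*} (b : Module.Basis ι ℂ V) {Φ : E → V} {D : Set E} {s : Set ι} {G : V → V}
  {j : ι}

theorem isPartialChart_empty_id (hD : D.Nonempty) : IsPartialChart b X Φ D ∅ id where
  differentiableOn := differentiableOn_id
  coord_comp_mem := by simp
  exists_jacobian_ne_zero := hD.imp fun y hy => ⟨hy, by simp [jacobian, ContinuousLinearMap.det]⟩

variable [FiniteDimensional ℂ V]

namespace IsPartialChart

variable {b}

theorem insert_of_jacobian_ne_zero {h : V → ℂ} (hG : IsPartialChart b X Φ D s G)
    (hh : h ∈ pullbackHolomorphic X Φ D) {y : E} (hy : y ∈ D)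
    (hJ : jacobian (replaceCoord b j G h) (Φ y) ≠ 0) :
    IsPartialChart b X Φ D (insert j s) (replaceCoord b j G h) where
  differentiableOn := differentiableOn_replaceCoord b hG.differentiableOn hh.1
  coord_comp_mem i hi := by
    rcases eq_or_ne i j with rfl | hij
    · rwa [show b.coord i ∘ replaceCoord b i G h = h from
        funext (coord_replaceCoord_self b i)]
    · rw [show b.coord i ∘ replaceCoord b j G h = b.coord i ∘ G from
        funext (coord_replaceCoord_of_ne b hij)]
      exact hG.coord_comp_mem i (hi.resolve_left hij)
  exists_jacobian_ne_zero := ⟨y, hy, hJ⟩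

theorem exists_insert (hX : IsOpen X) (hF : F ⊆ pullbackHolomorphic X Φ D)
    (hFsep : ∀ x ∈ X, ∀ y ∈ X, x ≠ y → ∃ f ∈ F, f x ≠ f y) (hΦ : MapsTo Φ D X)
    (hG : IsPartialChart b X Φ D s G) (j : ι) : ∃ G', IsPartialChart b X Φ D (insert j s) G' := by
  by_contra! hmax
  have hvanish : ∀ h ∈ pullbackHolomorphic X Φ D, ∀ y ∈ D,
      jacobian (replaceCoord b j G h) (Φ y) = 0 := fun h hh y hy =>
    of_not_not fun hJ => hmax _ (hG.insert_of_jacobian_ne_zero hh hy hJ)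
  have hmem : ∀ h ∈ pullbackHolomorphic X Φ D,
      jacobian (replaceCoord b j G h) ∈ pullbackHolomorphic X Φ D := fun h hh =>
    ⟨differentiableOn_jacobian (differentiableOn_replaceCoord b hG.differentiableOn hh.1) hX,
      (differentiableOn_const (0 : ℂ)).congr (hvanish h hh)⟩
  obtain ⟨y, hy, hJ⟩ := hG.exists_jacobian_ne_zero
  obtain ⟨x, hx, hne, heq⟩ := exists_ne_forall_eq_of_jacobian_replaceCoord_mem b (j := j)
    (B := pullbackHolomorphic X Φ D) hX (fun h hh => hh.1) hG.differentiableOn (hΦ hy) hJ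
    fun h hh => ⟨hmem h hh, hvanish h hh y hy⟩
  obtain ⟨f, hf, hfne⟩ := hFsep x hx (Φ y) (hΦ hy) hne
  exact hfne (heq f (hF hf))

end IsPartialChart

theorem exists_isPartialChart_univ (hX : IsOpen X) (hF : F ⊆ pullbackHolomorphic X Φ D)
    (hFsep : ∀ x ∈ X, ∀ y ∈ X, x ≠ y → ∃ f ∈ F, f x ≠ f y) (hΦ : MapsTo Φ D X)
    (hD : D.Nonempty) : ∃ G, IsPartialChart b X Φ D univ G := by
  have := Module.Finite.finite_basis b
  induction (univ : Set ι), (finite_univ : (univ : Set ι).Finite) using Set.Finite.induction_on with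
  | empty => exact ⟨id, isPartialChart_empty_id b hD⟩
  | insert _ _ hG => exact hG.elim fun _ hG => hG.exists_insert hX hF hFsep hΦ _

theorem differentiableOn_of_forall_comp_of_complex {Φ : ℂ → V} {D : Set ℂ} (hX : IsOpen X)
    (hD : IsOpen D) (hDc : IsPreconnected D) (hF : F ⊆ pullbackHolomorphic X Φ D)
    (hFsep : ∀ x ∈ X, ∀ y ∈ X, x ≠ y → ∃ f ∈ F, f x ≠ f y) (hΦ : MapsTo Φ D X)
    (hcont : ContinuousOn Φ D) : DifferentiableOn ℂ Φ D := by
  rcases D.eq_empty_or_nonempty with rfl | hDne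
  · exact differentiableOn_empty
  let b := Module.finBasis ℂ V
  obtain ⟨G, hG⟩ := exists_isPartialChart_univ b hX hF hFsep hΦ hDne
  have hJhol := differentiableOn_jacobian hG.differentiableOn hX
  have hJcont : ContinuousOn (jacobian G ∘ Φ) D := hJhol.continuousOn.comp hcont hΦ
  have hGΦ : DifferentiableOn ℂ (G ∘ Φ) D :=
    differentiableOn_of_coord b fun i => (hG.coord_comp_mem i (mem_univ i)).2
  have hregular : DifferentiableOn ℂ Φ (D ∩ support (jacobian G ∘ Φ)) := fun t ht =>
    (differentiableAt_of_comp_of_jacobian_ne_zero hG.differentiableOn hX (hΦ ht.1) ht.2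
      (hcont.continuousAt (hD.mem_nhds ht.1))
      (hGΦ.differentiableAt (hD.mem_nhds ht.1))).differentiableWithinAt
  refine differentiableOn_of_coord b fun i => ?_
  exact differentiableOn_of_differentiableOn_inter_support hD hDc hJcont
    ((differentiable_coord b i).continuous.comp_continuousOn hcont)
    (hJhol.comp hregular fun t ht => hΦ ht.1)
    ((differentiable_coord b i).comp_differentiableOn hregular) hG.exists_jacobian_ne_zero

end PullbackHolomorphic

theorem stmt19_general {E V : Type*} [NormedAddCommGroup E] [NormedSpace ℂ E]
    [NormedAddCommGroup V] [NormedSpace ℂ V] [FiniteDimensional ℂ V] {X : Set V} {Y : Set E}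
    (hX : IsOpen X) (hY : IsOpen Y) {F : Set (V → ℂ)} (hFhol : ∀ f ∈ F, DifferentiableOn ℂ f X)
    (hFsep : ∀ x ∈ X, ∀ y ∈ X, x ≠ y → ∃ f ∈ F, f x ≠ f y) {Φ : E → V} (hΦ : MapsTo Φ Y X)
    (hcont : ContinuousOn Φ Y) (h : ∀ f ∈ F, DifferentiableOn ℂ (f ∘ Φ) Y) :
    DifferentiableOn ℂ Φ Y := by
  have := FiniteDimensional.complete ℂ V
  refine GateauxHolomorphicOn.differentiableOn (fun z hz v => ?_) hY hcont
  let ℓ : ℂ → E := fun t => z + t • v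
  have hℓ : Differentiable ℂ ℓ := by fun_prop
  obtain ⟨r, hr, hball⟩ := Metric.isOpen_iff.1 (hY.preimage hℓ.continuous) 0 (by simpa [ℓ])
  have hslice : DifferentiableOn ℂ (Φ ∘ ℓ) (ball 0 r) :=
    differentiableOn_of_forall_comp_of_complex hX isOpen_ball (convex_ball 0 r).isPreconnected
      (fun f hf => ⟨hFhol f hf, (h f hf).comp hℓ.differentiableOn hball⟩) hFsep
      (hΦ.comp hball) (hcont.comp hℓ.continuous.continuousOn hball)
  exact hslice.differentiableAt (ball_mem_nhds 0 hr)

/-- Let `X ⊆ ℂ^d` and `Y ⊆ ℂ^m` be nonempty open connected sets, and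
let `F` be a collection of holomorphic functions on `X` that separates the points of `X`.
If `Φ : Y → X` is continuous on `Y` and `f ∘ Φ` is holomorphic on `Y` for every `f ∈ F`,
then `Φ` is holomorphic on `Y` (as a map into `ℂ^d`). -/
theorem stmt19 {d m : ℕ} (X : Set (Fin d → ℂ)) (Y : Set (Fin m → ℂ))
    (hXo : IsOpen X) (hXc : IsConnected X) (hYo : IsOpen Y) (hYc : IsConnected Y)
    (F : Set ((Fin d → ℂ) → ℂ))
    (hFhol : ∀ f ∈ F, DifferentiableOn ℂ f X)
    (hFsep : ∀ x ∈ X, ∀ y ∈ X, x ≠ y → ∃ f ∈ F, f x ≠ f y)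
    (Φ : (Fin m → ℂ) → (Fin d → ℂ)) (hΦmaps : Set.MapsTo Φ Y X)
    (hΦcont : ContinuousOn Φ Y)
    (h : ∀ f ∈ F, DifferentiableOn ℂ (f ∘ Φ) Y) :
    DifferentiableOn ℂ Φ Y :=
  stmt19_general hXo hYo hFhol hFsep hΦmaps hΦcont h
end
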